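/- arXiv:1104.5000 — 7 statements merged into one kernel-verified Lean document; each statement's English description precedes it below -/
import Mathlib

section
/- Let E be a finite-dimensional complex inner product space, T : E → E a self-adjoint linear map, and δ > 0. Suppose ψ_1, …, ψ_L is an orthonormal family in E and μ_1, …, μ_L are real numbers such that: (i) ‖Tψ_l − μ_l ψ_l‖² ≤ δ for every l; (ii) ⟨Tψ_l, ψ_{l'}⟩ = 0 for all l ≠ l'; (iii) Σ_{l ≠ l'} |⟨Tψ_l, Tψ_{l'}⟩| ≤ δ. Then there exist an orthonormal family e_1, …, e_L in E and real numbers λ_1, …, λ_L with T e_l = λ_l e_l and |λ_l − μ_l| ≤ √(2δ) for every l; that is, T has L eigenvalues, counted with multiplicity, each within √(2δ) of the corresponding μ_l. -/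
open scoped InnerProductSpace

/-!
Write `r l = T (ψ l) - μ l • ψ l` for the residuals. Off the diagonal their Gram matrix agrees with
that of the vectors `T (ψ l)`, so the map `ψ l ↦ r l` has norm at most `c = √(3δ/2)`. Hence, on the
span of those `ψ l` with `μ l` in an interval of centre `m` and radius `ρ`, the norm of `T - m` is
at most `c + ρ`, and comparing with the spectral decomposition of `T`, there are at least as many
eigenvalues within `c + ρ` of `m` as there are such `l`. Thus every interval contains no more of
the `μ l` than its `c`-neighbourhood contains eigenvalues. On the line this is enough for Hall's
marriage condition, and a matching assigns to each `μ l` its own eigenvalue at distance at most `c`.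
-/

section Matching

variable {ι κ G : Type*} [Fintype κ] [AddCommGroup G] [LinearOrder G]
  [IsOrderedAddMonoid G] {x : ι → G} {y : κ → G} {c : G}

open Finset in
theorem disjoint_biUnion_abs_sub_le [DecidableEq κ] {s t : Finset ι} {z : G}
    (hs : ∀ i ∈ s, x i + c < z) (ht : ∀ i ∈ t, z < x i - c) :
    Disjoint (s.biUnion fun i => {j | |y j - x i| ≤ c})
      (t.biUnion fun i => {j | |y j - x i| ≤ c}) := by
  simp only [disjoint_left, mem_biUnion, mem_filter, mem_univ, true_and, abs_sub_le_iff,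
    not_exists, not_and]
  rintro k ⟨i, hi, hki, -⟩ i' hi' - hi'k
  exact lt_irrefl (y k) <|
    calc y k ≤ x i + c := sub_le_iff_le_add'.1 hki
      _ < z := hs i hi
      _ < x i' - c := ht i' hi'
      _ ≤ y k := sub_le_comm.1 hi'k

variable [Fintype ι]

open Finset in
theorem card_le_card_biUnion_of_card_Icc_le [DecidableEq κ]
    (hcount : ∀ a b, a ≤ b →
      #{i | x i ∈ Set.Icc a b} ≤ #{j | y j ∈ Set.Icc (a - c) (b + c)}) (s : Finset ι) :
    #s ≤ #(s.biUnion fun i => {j | |y j - x i| ≤ c}) := by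
  classical
  induction s using Finset.strongInduction with
  | H s ih =>
  obtain rfl | hs := s.eq_empty_or_nonempty
  · simp
  obtain ⟨p, hp, hp_min⟩ := s.exists_min_image x hs
  obtain ⟨q, hq, hq_max⟩ := s.exists_max_image x hs
  by_cases hcover : ∀ j, y j ∈ Set.Icc (x p - c) (x q + c) → ∃ i ∈ s, |y j - x i| ≤ c
  · calc #s ≤ #{i | x i ∈ Set.Icc (x p) (x q)} :=
          card_le_card fun i hi => by simp [hp_min i hi, hq_max i hi]
      _ ≤ #{j | y j ∈ Set.Icc (x p - c) (x q + c)} := hcount _ _ (hp_min q hq)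
      _ ≤ _ := card_le_card fun j hj => by simpa using hcover j (by simpa using hj)
  -- An uncovered `y j` splits `s` into two parts whose neighbourhoods lie on either side of it.
  · push Not at hcover
    obtain ⟨j, ⟨hpj, hjq⟩, hj⟩ := hcover
    set below := s.filter fun i => x i + c < y j
    set above := s.filter fun i => y j < x i - c
    have hsplit : s ⊆ below ∪ above := fun i hi => by
      rw [mem_union, mem_filter, mem_filter]
      exact (lt_abs.1 (hj i hi)).imp (fun h => ⟨hi, lt_sub_iff_add_lt'.1 h⟩)
        (fun h => ⟨hi, by rwa [neg_sub, lt_sub_comm] at h⟩)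
    have hbelow : below ⊂ s := filter_ssubset.2 ⟨q, hq, hjq.not_gt⟩
    have habove : above ⊂ s := filter_ssubset.2 ⟨p, hp, hpj.not_gt⟩
    calc #s ≤ #below + #above := (card_le_card hsplit).trans (card_union_le _ _)
      _ ≤ _ := add_le_add (ih below hbelow) (ih above habove)
      _ = _ := (card_union_of_disjoint <| disjoint_biUnion_abs_sub_le
          (fun _ hi => (mem_filter.1 hi).2) (fun _ hi => (mem_filter.1 hi).2)).symm
      _ ≤ _ := card_le_card <| union_subset (biUnion_subset_biUnion_of_subset_left _ hbelow.subset)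
          (biUnion_subset_biUnion_of_subset_left _ habove.subset)

open Finset in
theorem exists_injective_abs_sub_le_of_card_Icc_le
    (hcount : ∀ a b, a ≤ b →
      #{i | x i ∈ Set.Icc a b} ≤ #{j | y j ∈ Set.Icc (a - c) (b + c)}) :
    ∃ f : ι → κ, f.Injective ∧ ∀ i, |y (f i) - x i| ≤ c := by
  classical
  simpa using (all_card_le_biUnion_card_iff_exists_injective _).1
    (card_le_card_biUnion_of_card_Icc_le hcount)

end Matching

section InnerProduct

variable {𝕜 E ι : Type*} [RCLike 𝕜] [NormedAddCommGroup E] [InnerProductSpace 𝕜 E]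

theorem norm_sum_smul_sq_eq_sum_add_sum_offDiag [Fintype ι] (r : ι → E) (a : ι → 𝕜) :
    ‖∑ i, a i • r i‖ ^ 2 = ∑ i, ‖a i‖ ^ 2 * ‖r i‖ ^ 2 +
      ∑ p ∈ Finset.univ.offDiag, RCLike.re ⟪a p.1 • r p.1, a p.2 • r p.2⟫_𝕜 := by
  classical
  calc ‖∑ i, a i • r i‖ ^ 2
      = ∑ p ∈ Finset.univ ×ˢ Finset.univ, RCLike.re ⟪a p.1 • r p.1, a p.2 • r p.2⟫_𝕜 := by
        rw [← inner_self_eq_norm_sq (𝕜 := 𝕜), sum_inner, map_sum, Finset.sum_product]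
        simp only [inner_sum, map_sum]
    _ = _ := by
        simp only [← Finset.diag_union_offDiag,
          Finset.sum_union (Finset.disjoint_diag_offDiag _), Finset.sum_diag,
          inner_self_eq_norm_sq, norm_smul, mul_pow]

theorem norm_sum_smul_sq_le_of_sum_offDiag_norm_inner_le [Fintype ι] {r : ι → E} {δ ε : ℝ}
    (hdiag : ∀ i, ‖r i‖ ^ 2 ≤ δ)
    (hoffDiag : ∑ p ∈ Finset.univ.offDiag, ‖⟪r p.1, r p.2⟫_𝕜‖ ≤ ε) (a : ι → 𝕜) :
    ‖∑ i, a i • r i‖ ^ 2 ≤ (δ + ε / 2) * ∑ i, ‖a i‖ ^ 2 := by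
  classical
  set A := ∑ i, ‖a i‖ ^ 2
  have hmul_le : ∀ i j, i ≠ j → ‖a i‖ * ‖a j‖ ≤ A / 2 := fun i j hij => by
    have hpair : ‖a i‖ ^ 2 + ‖a j‖ ^ 2 ≤ A := by
      rw [← Finset.sum_pair (f := fun l => ‖a l‖ ^ 2) hij]
      exact Finset.sum_le_univ_sum_of_nonneg fun l => sq_nonneg _
    linarith [two_mul_le_add_sq ‖a i‖ ‖a j‖]
  have hterm : ∀ p ∈ (Finset.univ : Finset ι).offDiag,
      RCLike.re ⟪a p.1 • r p.1, a p.2 • r p.2⟫_𝕜 ≤ A / 2 * ‖⟪r p.1, r p.2⟫_𝕜‖ := fun p hp =>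
    calc RCLike.re ⟪a p.1 • r p.1, a p.2 • r p.2⟫_𝕜
        ≤ ‖⟪a p.1 • r p.1, a p.2 • r p.2⟫_𝕜‖ := RCLike.re_le_norm _
      _ = ‖a p.1‖ * ‖a p.2‖ * ‖⟪r p.1, r p.2⟫_𝕜‖ := by
          rw [inner_smul_left, inner_smul_right, norm_mul, norm_mul, RCLike.norm_conj, mul_assoc]
      _ ≤ A / 2 * ‖⟪r p.1, r p.2⟫_𝕜‖ := by
          gcongr
          exact hmul_le _ _ (Finset.mem_offDiag.1 hp).2.2
  calc ‖∑ i, a i • r i‖ ^ 2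
      = ∑ i, ‖a i‖ ^ 2 * ‖r i‖ ^ 2 +
          ∑ p ∈ Finset.univ.offDiag, RCLike.re ⟪a p.1 • r p.1, a p.2 • r p.2⟫_𝕜 :=
        norm_sum_smul_sq_eq_sum_add_sum_offDiag r a
    _ ≤ ∑ i, ‖a i‖ ^ 2 * δ + ∑ p ∈ Finset.univ.offDiag, A / 2 * ‖⟪r p.1, r p.2⟫_𝕜‖ :=
        add_le_add (by gcongr with i; exact hdiag i) (Finset.sum_le_sum hterm)
    _ ≤ A * δ + A / 2 * ε := by
        rw [← Finset.sum_mul, ← Finset.mul_sum]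
        gcongr
    _ = (δ + ε / 2) * A := by ring

theorem norm_sum_smul_sq_of_orthonormal {ψ : ι → E} (hψ : Orthonormal 𝕜 ψ) (a : ι → 𝕜)
    (s : Finset ι) : ‖∑ i ∈ s, a i • ψ i‖ ^ 2 = ∑ i ∈ s, ‖a i‖ ^ 2 := by
  simpa using hψ.orthogonalFamily.norm_sum a s

theorem norm_sum_mul_smul_le_of_orthonormal {ψ : ι → E} (hψ : Orthonormal 𝕜 ψ) {s : Finset ι}
    {d : ι → 𝕜} {ρ : ℝ} (hρ : 0 ≤ ρ) (hd : ∀ i ∈ s, ‖d i‖ ≤ ρ) (a : ι → 𝕜) :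
    ‖∑ i ∈ s, (a i * d i) • ψ i‖ ≤ ρ * ‖∑ i ∈ s, a i • ψ i‖ := by
  refine le_of_sq_le_sq ?_ (by positivity)
  rw [mul_pow, norm_sum_smul_sq_of_orthonormal hψ, norm_sum_smul_sq_of_orthonormal hψ,
    Finset.mul_sum]
  refine Finset.sum_le_sum fun i hi => ?_
  rw [norm_mul, mul_pow, mul_comm]
  gcongr
  exact hd i hi

theorem inner_sub_smul_sub_smul_of_orthonormal {ψ φ : ι → E} (hψ : Orthonormal 𝕜 ψ)
    (hφψ : ∀ i j, i ≠ j → ⟪φ i, ψ j⟫_𝕜 = 0) (d : ι → 𝕜) {i j : ι} (hij : i ≠ j) :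
    ⟪φ i - d i • ψ i, φ j - d j • ψ j⟫_𝕜 = ⟪φ i, φ j⟫_𝕜 := by
  simp [inner_sub_left, inner_sub_right, inner_smul_left, inner_smul_right, hφψ i j hij,
    inner_eq_zero_symm.1 (hφψ j i hij.symm), hψ.inner_eq_zero hij]

theorem norm_apply_sub_smul_le_of_mem_span [Fintype ι] {T : E →ₗ[𝕜] E}
    {ψ : ι → E} {μ : ι → ℝ} {c : ℝ} (hψ : Orthonormal 𝕜 ψ)
    (hres : ∀ a : ι → 𝕜,
      ‖∑ i, a i • (T (ψ i) - (μ i : 𝕜) • ψ i)‖ ≤ c * ‖∑ i, a i • ψ i‖)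
    {s : Finset ι} {m ρ : ℝ} (hρ : 0 ≤ ρ) (hμ : ∀ i ∈ s, |μ i - m| ≤ ρ)
    {v : E} (hv : v ∈ Submodule.span 𝕜 (ψ '' s)) :
    ‖T v - (m : 𝕜) • v‖ ≤ (c + ρ) * ‖v‖ := by
  classical
  obtain ⟨a, rfl⟩ := (Submodule.mem_span_image_finset_iff_exists_fun' 𝕜).1 hv
  have hres_s : ‖∑ i ∈ s, a i • (T (ψ i) - (μ i : 𝕜) • ψ i)‖ ≤ c * ‖∑ i ∈ s, a i • ψ i‖ := by
    simpa [ite_smul] using hres fun i => if i ∈ s then a i else 0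
  have hdiag : ‖∑ i ∈ s, (a i * ((μ i - m : ℝ) : 𝕜)) • ψ i‖ ≤ ρ * ‖∑ i ∈ s, a i • ψ i‖ :=
    norm_sum_mul_smul_le_of_orthonormal hψ hρ
      (fun i hi => (RCLike.norm_ofReal _).trans_le (hμ i hi)) a
  have hsplit : T (∑ i ∈ s, a i • ψ i) - (m : 𝕜) • ∑ i ∈ s, a i • ψ i =
      ∑ i ∈ s, a i • (T (ψ i) - (μ i : 𝕜) • ψ i) +
        ∑ i ∈ s, (a i * ((μ i - m : ℝ) : 𝕜)) • ψ i := by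
    simp only [map_sum, map_smul, Finset.smul_sum, ← Finset.sum_sub_distrib,
      ← Finset.sum_add_distrib, RCLike.ofReal_sub]
    exact Finset.sum_congr rfl fun i _ => by module
  rw [hsplit, add_mul]
  exact norm_add_le_of_le hres_s hdiag

end InnerProduct

section Symmetric

variable {𝕜 E ι : Type*} [RCLike 𝕜] [NormedAddCommGroup E] [InnerProductSpace 𝕜 E]
  [FiniteDimensional 𝕜 E] {T : E →ₗ[𝕜] E} {n : ℕ}

theorem norm_sq_apply_sub_smul_eq_sum_eigenvalues (hT : T.IsSymmetric)
    (hn : Module.finrank 𝕜 E = n) (m : ℝ) (v : E) :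
    ‖T v - (m : 𝕜) • v‖ ^ 2 = ∑ j, (hT.eigenvalues hn j - m) ^ 2 *
      ‖(hT.eigenvectorBasis hn).repr v j‖ ^ 2 := by
  rw [← (hT.eigenvectorBasis hn).repr.norm_map, EuclideanSpace.norm_sq_eq]
  refine Finset.sum_congr rfl fun j _ => ?_
  rw [map_sub, map_smul, PiLp.sub_apply, PiLp.smul_apply, hT.eigenvectorBasis_apply_self_apply,
    smul_eq_mul, ← sub_mul, norm_mul, mul_pow, ← RCLike.ofReal_sub, RCLike.norm_ofReal, sq_abs]

open Finset in
theorem finrank_le_card_eigenvalues_abs_sub_le (hT : T.IsSymmetric)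
    (hn : Module.finrank 𝕜 E = n) {V : Submodule 𝕜 E} {m r : ℝ}
    (hV : ∀ v ∈ V, ‖T v - (m : 𝕜) • v‖ ≤ r * ‖v‖) :
    Module.finrank 𝕜 V ≤ #{j | |hT.eigenvalues hn j - m| ≤ r} := by
  set b := hT.eigenvectorBasis hn
  let nearCoords : V →ₗ[𝕜] ({j // |hT.eigenvalues hn j - m| ≤ r} → 𝕜) :=
    LinearMap.pi fun j => b.toBasis.coord j ∘ₗ V.subtype
  suffices hinj : Function.Injective nearCoords by
    simpa [Fintype.card_subtype] using LinearMap.finrank_le_finrank_of_injective hinj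
  rw [injective_iff_map_eq_zero]
  rintro ⟨v, hv⟩ hnear
  have hcoord : ∀ j, |hT.eigenvalues hn j - m| ≤ r → b.repr v j = 0 := fun j hj => by
    simpa [nearCoords] using congrFun hnear ⟨j, hj⟩
  by_contra hv_ne
  replace hv_ne : v ≠ 0 := by simpa using hv_ne
  have hr : 0 ≤ r :=
    nonneg_of_mul_nonneg_left ((norm_nonneg _).trans (hV v hv)) (norm_pos_iff.2 hv_ne)
  have hfar : ∀ j, b.repr v j ≠ 0 → r ^ 2 < (hT.eigenvalues hn j - m) ^ 2 := fun j hj =>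
    sq_lt_sq.2 <| (abs_of_nonneg hr).trans_lt <| not_le.1 <| mt (hcoord j) hj
  obtain ⟨k, hk⟩ : ∃ k, b.repr v k ≠ 0 := by
    by_contra! hall
    exact hv_ne (b.repr.map_eq_zero_iff.1 (PiLp.ext hall))
  have hlt : (r * ‖v‖) ^ 2 < ‖T v - (m : 𝕜) • v‖ ^ 2 := by
    rw [norm_sq_apply_sub_smul_eq_sum_eigenvalues hT hn, mul_pow, ← b.repr.norm_map,
      EuclideanSpace.norm_sq_eq, mul_sum]
    refine sum_lt_sum (fun j _ => ?_) ⟨k, mem_univ k, ?_⟩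
    · obtain hj | hj := eq_or_ne (b.repr v j) 0
      · simp [b, hj]
      · exact mul_le_mul_of_nonneg_right (hfar j hj).le (sq_nonneg _)
    · exact mul_lt_mul_of_pos_right (hfar k hk) (pow_pos (norm_pos_iff.2 hk) 2)
  exact hlt.not_ge (by gcongr; exact hV v hv)

variable [Fintype ι] {ψ : ι → E} {μ : ι → ℝ} {c : ℝ}

open Finset in
theorem card_mem_Icc_le_card_eigenvalues_mem_Icc (hT : T.IsSymmetric)
    (hn : Module.finrank 𝕜 E = n) (hψ : Orthonormal 𝕜 ψ)
    (hres : ∀ a : ι → 𝕜,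
      ‖∑ i, a i • (T (ψ i) - (μ i : 𝕜) • ψ i)‖ ≤ c * ‖∑ i, a i • ψ i‖)
    {x y : ℝ} (hxy : x ≤ y) :
    #{i | μ i ∈ Set.Icc x y} ≤ #{j | hT.eigenvalues hn j ∈ Set.Icc (x - c) (y + c)} := by
  set s : Finset ι := {i | μ i ∈ Set.Icc x y}
  have hfinrank : Module.finrank 𝕜 (Submodule.span 𝕜 (ψ '' s)) = #s := by
    have hs : LinearIndependent 𝕜 fun i : s => ψ i :=
      hψ.linearIndependent.comp _ Subtype.val_injective
    rw [Set.image_eq_range]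
    simpa using finrank_span_eq_card hs
  have hμ : ∀ i ∈ s, |μ i - (x + y) / 2| ≤ (y - x) / 2 := fun i hi => by
    obtain ⟨hx, hy⟩ := (mem_filter.1 hi).2
    exact abs_le.2 ⟨by linarith, by linarith⟩
  calc #s = Module.finrank 𝕜 (Submodule.span 𝕜 (ψ '' s)) := hfinrank.symm
    _ ≤ #{j | |hT.eigenvalues hn j - (x + y) / 2| ≤ c + (y - x) / 2} :=
        finrank_le_card_eigenvalues_abs_sub_le hT hn fun _ hv =>
          norm_apply_sub_smul_le_of_mem_span hψ hres (by linarith) hμ hv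
    _ ≤ #{j | hT.eigenvalues hn j ∈ Set.Icc (x - c) (y + c)} := by
        gcongr with j
        intro hj
        obtain ⟨hlo, hhi⟩ := abs_le.1 hj
        exact ⟨by linarith, by linarith⟩

theorem exists_orthonormal_eigenvectors_of_norm_residual_le (hT : T.IsSymmetric)
    (hψ : Orthonormal 𝕜 ψ)
    (hres : ∀ a : ι → 𝕜,
      ‖∑ i, a i • (T (ψ i) - (μ i : 𝕜) • ψ i)‖ ≤ c * ‖∑ i, a i • ψ i‖) :
    ∃ (e : ι → E) (lam : ι → ℝ), Orthonormal 𝕜 e ∧ (∀ i, T (e i) = (lam i : 𝕜) • e i) ∧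
      ∀ i, |lam i - μ i| ≤ c := by
  obtain ⟨f, hf, hclose⟩ := exists_injective_abs_sub_le_of_card_Icc_le fun _ _ hxy =>
    card_mem_Icc_le_card_eigenvalues_mem_Icc hT rfl hψ hres hxy
  exact ⟨hT.eigenvectorBasis rfl ∘ f, hT.eigenvalues rfl ∘ f,
    (hT.eigenvectorBasis rfl).orthonormal.comp f hf,
    fun i => hT.apply_eigenvectorBasis rfl (f i), hclose⟩

theorem almost_eigensections_give_eigenvalues_general (hT : T.IsSymmetric)
    (hψ : Orthonormal 𝕜 ψ) {δ ε : ℝ}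
    (hres : ∀ i, ‖T (ψ i) - (μ i : 𝕜) • ψ i‖ ^ 2 ≤ δ)
    (horth : ∀ i j, i ≠ j → ⟪T (ψ i), ψ j⟫_𝕜 = 0)
    (hgram : ∑ p ∈ Finset.univ.offDiag, ‖⟪T (ψ p.1), T (ψ p.2)⟫_𝕜‖ ≤ ε) :
    ∃ (e : ι → E) (lam : ι → ℝ), Orthonormal 𝕜 e ∧ (∀ i, T (e i) = (lam i : 𝕜) • e i) ∧
      ∀ i, |lam i - μ i| ≤ √(δ + ε / 2) := by
  refine exists_orthonormal_eigenvectors_of_norm_residual_le hT hψ fun a => ?_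
  have hgram_res : ∑ p ∈ Finset.univ.offDiag,
      ‖⟪T (ψ p.1) - (μ p.1 : 𝕜) • ψ p.1, T (ψ p.2) - (μ p.2 : 𝕜) • ψ p.2⟫_𝕜‖ ≤ ε := by
    refine (Finset.sum_congr rfl fun p hp => ?_).trans_le hgram
    rw [inner_sub_smul_sub_smul_of_orthonormal hψ horth (fun i => (μ i : 𝕜))
      (Finset.mem_offDiag.1 hp).2.2]
  have hbound := norm_sum_smul_sq_le_of_sum_offDiag_norm_inner_le hres hgram_res a
  rw [← norm_sum_smul_sq_of_orthonormal hψ] at hbound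
  simpa using Real.le_sqrt_of_sq_le hbound

end Symmetric

/-- Lemma 5.4 (eigenvalue approximation from almost eigensections), finite dimensional
linear algebra version. -/
theorem almost_eigensections_give_eigenvalues
    {E : Type*} [NormedAddCommGroup E] [InnerProductSpace ℂ E] [FiniteDimensional ℂ E]
    (T : E →ₗ[ℂ] E) (hT : T.IsSymmetric)
    (δ : ℝ) (hδ : 0 < δ) (L : ℕ) (ψ : Fin L → E) (hψ : Orthonormal ℂ ψ)
    (μ : Fin L → ℝ)
    (h1 : ∀ l, ‖T (ψ l) - (μ l : ℂ) • ψ l‖ ^ 2 ≤ δ)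
    (h2 : ∀ l l', l ≠ l' → ⟪T (ψ l), ψ l'⟫_ℂ = 0)
    (h3 : ∑ p ∈ Finset.univ.offDiag, ‖⟪T (ψ p.1), T (ψ p.2)⟫_ℂ‖ ≤ δ) :
    ∃ (e : Fin L → E) (lam : Fin L → ℝ),
      Orthonormal ℂ e ∧ (∀ l, T (e l) = (lam l : ℂ) • e l) ∧
      ∀ l, |lam l - μ l| ≤ Real.sqrt (2 * δ) := by
  obtain ⟨e, lam, he, hTe, hlam⟩ := almost_eigensections_give_eigenvalues_general hT hψ h1 h2 h3
  exact ⟨e, lam, he, hTe, fun l => (hlam l).trans (Real.sqrt_le_sqrt (by linarith))⟩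
end

section
/- For every δ > 0 there exists a constant c ≥ 0 with the following property: for every positive integer L₀ with L₀ > 2δ and every finite family u_1, …, u_L of unit vectors in ℂ^{L₀} such that |⟨u_l, u_{l'}⟩| < δ/L₀ for all l ≠ l', one has L ≤ L₀ + c. -/
open scoped InnerProductSpace

/-!
Let `A` be the matrix whose columns are the coordinates of the `L` vectors in an orthonormal basis
of a `d`-dimensional space. The Gram matrix `Aᴴ * A` and the `d × d` matrix `A * Aᴴ` have the same
trace and the same sum of squared entries, and Cauchy–Schwarz on the diagonal of the latter gives
the Welch inequality `L ≤ d (1 + (L - 1) μ²)` for unit vectors of coherence at most `μ`. With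
`μ = δ / d` this yields `L ≤ d + 2δ²` as soon as `d ≥ 2δ²`. In each of the finitely many remaining
dimensions, `δ / d < 1` keeps the vectors uniformly separated on a compact sphere, so their number
is bounded.
-/

open Module Metric
open scoped NNReal

section Welch

variable {𝕜 E ι m n : Type*} [RCLike 𝕜] [Fintype m] [Fintype n]

lemma trace_mul_conjTranspose_self_eq_sum_norm_sq (M : Matrix m n 𝕜) :
    (M * M.conjTranspose).trace = ((∑ i, ∑ j, ‖M i j‖ ^ 2 : ℝ) : 𝕜) := by
  simp [Matrix.trace, Matrix.mul_apply, RCLike.mul_conj]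

lemma sum_norm_sq_mul_conjTranspose_self (A : Matrix m n 𝕜) :
    ∑ i, ∑ j, ‖(A * A.conjTranspose) i j‖ ^ 2 = ∑ i, ∑ j, ‖(A.conjTranspose * A) i j‖ ^ 2 := by
  rw [← RCLike.ofReal_inj (K := 𝕜), ← trace_mul_conjTranspose_self_eq_sum_norm_sq,
    ← trace_mul_conjTranspose_self_eq_sum_norm_sq]
  simp only [Matrix.conjTranspose_mul, Matrix.conjTranspose_conjTranspose]
  rw [Matrix.mul_assoc, Matrix.trace_mul_comm]
  simp only [Matrix.mul_assoc]

lemma norm_trace_sq_le_card_mul_sum_norm_sq (S : Matrix n n 𝕜) :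
    ‖S.trace‖ ^ 2 ≤ Fintype.card n * ∑ i, ∑ j, ‖S i j‖ ^ 2 :=
  calc ‖S.trace‖ ^ 2 ≤ (∑ i, ‖S i i‖) ^ 2 := by
        gcongr
        exact norm_sum_le _ _
    _ ≤ Fintype.card n * ∑ i, ‖S i i‖ ^ 2 := sq_sum_le_card_mul_sum_sq
    _ ≤ Fintype.card n * ∑ i, ∑ j, ‖S i j‖ ^ 2 := by
        gcongr with i
        exact Finset.single_le_sum (f := fun j ↦ ‖S i j‖ ^ 2) (fun _ _ ↦ by positivity)
          (Finset.mem_univ i)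

lemma norm_trace_conjTranspose_mul_self_sq_le (A : Matrix m n 𝕜) :
    ‖(A.conjTranspose * A).trace‖ ^ 2 ≤
      Fintype.card m * ∑ i, ∑ j, ‖(A.conjTranspose * A) i j‖ ^ 2 := by
  rw [Matrix.trace_mul_comm, ← sum_norm_sq_mul_conjTranspose_self]
  exact norm_trace_sq_le_card_mul_sum_norm_sq _

variable [NormedAddCommGroup E] [InnerProductSpace 𝕜 E]

lemma gram_eq_conjTranspose_mul_self (b : OrthonormalBasis m 𝕜 E) (u : ι → E) :
    Matrix.gram 𝕜 u =
      (Matrix.of fun i l ↦ ⟪b i, u l⟫_𝕜).conjTranspose * Matrix.of fun i l ↦ ⟪b i, u l⟫_𝕜 := by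
  ext l l'
  simp [Matrix.mul_apply, b.sum_inner_mul_inner]

variable [Fintype ι]

variable (𝕜) in
lemma trace_gram (u : ι → E) : (Matrix.gram 𝕜 u).trace = ((∑ l, ‖u l‖ ^ 2 : ℝ) : 𝕜) := by
  simp [Matrix.trace, inner_self_eq_norm_sq_to_K]

variable (𝕜) in
theorem sq_sum_norm_sq_le_finrank_mul_sum_norm_inner_sq [FiniteDimensional 𝕜 E] (u : ι → E) :
    (∑ l, ‖u l‖ ^ 2) ^ 2 ≤ finrank 𝕜 E * ∑ l, ∑ l', ‖⟪u l, u l'⟫_𝕜‖ ^ 2 := by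
  have gram_eq := gram_eq_conjTranspose_mul_self (stdOrthonormalBasis 𝕜 E) u
  have trace_sq_le := norm_trace_conjTranspose_mul_self_sq_le
    (Matrix.of fun i l ↦ ⟪stdOrthonormalBasis 𝕜 E i, u l⟫_𝕜)
  rw [← gram_eq, trace_gram, RCLike.norm_ofReal, sq_abs, Fintype.card_fin] at trace_sq_le
  exact trace_sq_le

lemma sum_norm_inner_sq_le {u : ι → E} {μ : ℝ} (hu : ∀ l, ‖u l‖ = 1)
    (hμ : Pairwise fun l l' ↦ ‖⟪u l, u l'⟫_𝕜‖ ≤ μ) (l : ι) :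
    ∑ l', ‖⟪u l, u l'⟫_𝕜‖ ^ 2 ≤ 1 + (Fintype.card ι - 1) * μ ^ 2 := by
  classical
  have diagonal : ‖⟪u l, u l⟫_𝕜‖ ^ 2 = 1 := by simp [inner_self_eq_norm_sq_to_K, hu]
  have offDiagonal : ∑ l' ∈ Finset.univ.erase l, ‖⟪u l, u l'⟫_𝕜‖ ^ 2 ≤
      (Finset.univ.erase l).card • μ ^ 2 :=
    Finset.sum_le_card_nsmul _ _ _ fun l' hl' ↦ by
      gcongr
      exact hμ (Finset.ne_of_mem_erase hl').symm
  rw [← Finset.add_sum_erase _ _ (Finset.mem_univ l), diagonal]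
  simpa [Finset.card_erase_of_mem, Nat.cast_pred (Fintype.card_pos_iff.2 ⟨l⟩)] using offDiagonal

theorem card_le_finrank_mul_of_norm_inner_le [Nonempty ι] [FiniteDimensional 𝕜 E] {u : ι → E}
    {μ : ℝ} (hu : ∀ l, ‖u l‖ = 1) (hμ : Pairwise fun l l' ↦ ‖⟪u l, u l'⟫_𝕜‖ ≤ μ) :
    (Fintype.card ι : ℝ) ≤ finrank 𝕜 E * (1 + (Fintype.card ι - 1) * μ ^ 2) := by
  have card_pos : (0 : ℝ) < Fintype.card ι := by exact_mod_cast Fintype.card_pos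
  refine le_of_mul_le_mul_left ?_ card_pos
  calc (Fintype.card ι : ℝ) * Fintype.card ι = (∑ l, ‖u l‖ ^ 2) ^ 2 := by simp [hu, sq]
    _ ≤ finrank 𝕜 E * ∑ l, ∑ l', ‖⟪u l, u l'⟫_𝕜‖ ^ 2 :=
        sq_sum_norm_sq_le_finrank_mul_sum_norm_inner_sq 𝕜 u
    _ ≤ finrank 𝕜 E * ∑ _l : ι, (1 + (Fintype.card ι - 1) * μ ^ 2) := by
        gcongr with l
        exact sum_norm_inner_sq_le hu hμ l
    _ = Fintype.card ι * (finrank 𝕜 E * (1 + (Fintype.card ι - 1) * μ ^ 2)) := by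
        simp only [Finset.sum_const, Finset.card_univ, nsmul_eq_mul]
        ring

theorem card_le_finrank_add_two_mul_sq [FiniteDimensional 𝕜 E] {u : ι → E} {δ : ℝ}
    (hδ : 2 * δ ^ 2 ≤ finrank 𝕜 E) (hu : ∀ l, ‖u l‖ = 1)
    (hinner : Pairwise fun l l' ↦ ‖⟪u l, u l'⟫_𝕜‖ ≤ δ / finrank 𝕜 E) :
    (Fintype.card ι : ℝ) ≤ finrank 𝕜 E + 2 * δ ^ 2 := by
  rcases isEmpty_or_nonempty ι with _ | _
  · simp only [Fintype.card_eq_zero, Nat.cast_zero]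
    positivity
  have : Nontrivial E :=
    nontrivial_of_ne (u (Classical.arbitrary ι)) 0 (norm_ne_zero_iff.1 (by simp [hu]))
  have finrank_pos : (0 : ℝ) < finrank 𝕜 E := by exact_mod_cast finrank_pos (R := 𝕜) (M := E)
  have welch := card_le_finrank_mul_of_norm_inner_le hu hinner
  set L : ℝ := (Fintype.card ι : ℝ)
  set d : ℝ := (finrank 𝕜 E : ℝ)
  have cleared : L * (d - δ ^ 2) ≤ d ^ 2 - δ ^ 2 := by
    have := mul_le_mul_of_nonneg_left welch finrank_pos.le
    field_simp at this
    linarith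
  have gap_pos : 0 < d - δ ^ 2 := by linarith
  refine le_of_mul_le_mul_right (cleared.trans ?_) gap_pos
  nlinarith [mul_nonneg (sq_nonneg δ) (sub_nonneg.2 hδ)]

end Welch

section Packing

lemma packingNumber_ne_top_of_totallyBounded {X : Type*} [PseudoEMetricSpace X] {ε : ℝ≥0}
    {A : Set X} (hε : ε ≠ 0) (hA : TotallyBounded A) : packingNumber ε A ≠ ⊤ := by
  obtain ⟨C, -, C_finite, C_cover⟩ :=
    exists_finite_isCover_of_totallyBounded (half_pos (pos_iff_ne_zero.2 hε)).ne' hA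
  refine ne_top_of_le_ne_top C_finite.encard_lt_top.ne ?_
  calc packingNumber ε A = packingNumber (2 * (ε / 2)) A := by rw [mul_div_cancel₀ ε two_ne_zero]
    _ ≤ externalCoveringNumber (ε / 2) A := packingNumber_two_mul_le_externalCoveringNumber _ _
    _ ≤ C.encard := C_cover.externalCoveringNumber_le_encard

lemma card_le_packingNumber_of_pairwise_lt_edist {X ι : Type*} [PseudoEMetricSpace X] [Fintype ι]
    {ε : ℝ≥0} {A : Set X} {u : ι → X} (hA : ∀ l, u l ∈ A)
    (hu : Pairwise fun l l' ↦ ε < edist (u l) (u l')) :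
    (Fintype.card ι : ℕ∞) ≤ packingNumber ε A := by
  have u_injective : u.Injective := fun l l' h ↦ by
    by_contra hne
    simpa [h] using hu hne
  have range_separated : IsSeparated ε (Set.range u) := by
    rintro _ ⟨l, rfl⟩ _ ⟨l', rfl⟩ hne
    exact hu fun h ↦ hne (congrArg u h)
  calc (Fintype.card ι : ℕ∞) = ENat.card ι := ENat.card_eq_coe_fintype_card.symm
    _ ≤ (Set.range u).encard := u_injective.encard_range
    _ ≤ packingNumber ε A :=
        range_separated.encard_le_packingNumber (Set.range_subset_iff.2 hA)

variable {𝕜 : Type*} [RCLike 𝕜]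

lemma sqrt_one_sub_lt_dist_of_re_inner_le {E : Type*} [SeminormedAddCommGroup E]
    [InnerProductSpace 𝕜 E] {x y : E} {μ : ℝ} (hx : ‖x‖ = 1) (hy : ‖y‖ = 1)
    (hμ : μ < 1) (hxy : RCLike.re ⟪x, y⟫_𝕜 ≤ μ) : √(1 - μ) < dist x y := by
  have dist_sq : dist x y ^ 2 = 2 - 2 * RCLike.re ⟪x, y⟫_𝕜 := by
    rw [dist_eq_norm, norm_sub_sq (𝕜 := 𝕜), hx, hy]
    ring
  rw [← abs_of_nonneg (dist_nonneg (x := x) (y := y)), ← Real.sqrt_sq_eq_abs, dist_sq]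
  exact Real.sqrt_lt_sqrt (by linarith) (by linarith)

lemma exists_card_le_of_re_inner_le (E : Type*) [NormedAddCommGroup E] [InnerProductSpace 𝕜 E]
    [FiniteDimensional 𝕜 E] {μ : ℝ} (hμ : μ < 1) :
    ∃ N : ℕ, ∀ (ι : Type*) [Fintype ι] (u : ι → E), (∀ l, ‖u l‖ = 1) →
      (Pairwise fun l l' ↦ RCLike.re ⟪u l, u l'⟫_𝕜 ≤ μ) → Fintype.card ι ≤ N := by
  have : ProperSpace E := FiniteDimensional.proper_rclike 𝕜 E
  have ε_ne_zero : (√(1 - μ)).toNNReal ≠ 0 :=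
    (Real.toNNReal_pos.2 (Real.sqrt_pos.2 (sub_pos.2 hμ))).ne'
  obtain ⟨N, hN⟩ := ENat.ne_top_iff_exists.1 <| packingNumber_ne_top_of_totallyBounded ε_ne_zero
    (isCompact_sphere (0 : E) 1).totallyBounded
  refine ⟨N, fun ι _ u hu hinner ↦ ?_⟩
  have separated ⦃l l' : ι⦄ (hne : l ≠ l') : ENNReal.ofReal √(1 - μ) < edist (u l) (u l') := by
    rw [edist_dist, ENNReal.ofReal_lt_ofReal_iff_of_nonneg (Real.sqrt_nonneg _)]
    exact sqrt_one_sub_lt_dist_of_re_inner_le (hu l) (hu l') hμ (hinner hne)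
  have card_le := card_le_packingNumber_of_pairwise_lt_edist
    (fun l ↦ mem_sphere_zero_iff_norm.2 (hu l)) separated
  rw [← hN] at card_le
  exact_mod_cast card_le

variable (𝕜) in
lemma exists_card_le_of_finrank_eq (n : ℕ) {μ : ℝ} (hμ : μ < 1) :
    ∃ N : ℕ, ∀ (E : Type*) [NormedAddCommGroup E] [InnerProductSpace 𝕜 E]
      [FiniteDimensional 𝕜 E], finrank 𝕜 E = n →
      ∀ (ι : Type*) [Fintype ι] (u : ι → E), (∀ l, ‖u l‖ = 1) →
        (Pairwise fun l l' ↦ RCLike.re ⟪u l, u l'⟫_𝕜 ≤ μ) → Fintype.card ι ≤ N := by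
  obtain ⟨N, hN⟩ := exists_card_le_of_re_inner_le (𝕜 := 𝕜) (EuclideanSpace 𝕜 (Fin n)) hμ
  refine ⟨N, fun E _ _ _ hn ι _ u hu hinner ↦ ?_⟩
  subst hn
  exact hN ι (fun l ↦ (stdOrthonormalBasis 𝕜 E).repr (u l)) (by simpa using hu)
    (by simpa only [LinearIsometryEquiv.inner_map_map] using hinner)

end Packing

theorem welch_bound_dimension_count_general (𝕜 : Type*) [RCLike 𝕜] (δ : ℝ) :
    ∃ c : ℝ, 0 ≤ c ∧
      ∀ (E : Type*) [NormedAddCommGroup E] [InnerProductSpace 𝕜 E] [FiniteDimensional 𝕜 E],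
        δ < finrank 𝕜 E →
        ∀ (ι : Type*) [Fintype ι] (u : ι → E),
          (∀ l, ‖u l‖ = 1) →
          (Pairwise fun l l' ↦ ‖⟪u l, u l'⟫_𝕜‖ ≤ δ / finrank 𝕜 E) →
          (Fintype.card ι : ℝ) ≤ finrank 𝕜 E + c := by
  have coherence_lt_one (n : ℕ) (hn : δ < n) : δ / n < 1 := by
    rcases n.eq_zero_or_pos with rfl | n_pos
    · simp
    · rwa [div_lt_one₀ (by exact_mod_cast n_pos)]
  choose! N hN using fun (n : ℕ) (hn : δ < n) ↦
    exists_card_le_of_finrank_eq 𝕜 n (coherence_lt_one n hn)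
  refine ⟨2 * δ ^ 2 + ∑ n ∈ Finset.range ⌈2 * δ ^ 2⌉₊, (N n : ℝ), by positivity,
    fun E _ _ _ hE ι _ u hu hinner ↦ ?_⟩
  rcases le_or_gt (2 * δ ^ 2) (finrank 𝕜 E : ℝ) with large | small
  · have := card_le_finrank_add_two_mul_sq large hu hinner
    have : (0 : ℝ) ≤ ∑ n ∈ Finset.range ⌈2 * δ ^ 2⌉₊, (N n : ℝ) := by positivity
    linarith
  · have card_le : (Fintype.card ι : ℝ) ≤ N (finrank 𝕜 E) := mod_cast
      hN _ hE E rfl ι u hu fun l l' hne ↦ (RCLike.re_le_norm _).trans (hinner hne)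
    have le_sum : (N (finrank 𝕜 E) : ℝ) ≤ ∑ n ∈ Finset.range ⌈2 * δ ^ 2⌉₊, (N n : ℝ) :=
      Finset.single_le_sum (f := fun n ↦ (N n : ℝ)) (fun _ _ ↦ Nat.cast_nonneg _)
        (Finset.mem_range.2 (Nat.lt_ceil.2 small))
    have : (0 : ℝ) ≤ finrank 𝕜 E + 2 * δ ^ 2 := by positivity
    linarith

/-- Lemma (Welch bound consequence): a family of unit vectors in `ℂ^{L₀}` with pairwise
inner products of magnitude less than `δ/L₀` has at most `L₀ + c` elements. -/
theorem welch_bound_dimension_count (δ : ℝ) (hδ : 0 < δ) :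
    ∃ c : ℝ, 0 ≤ c ∧
      ∀ (L₀ : ℕ), 2 * δ < (L₀ : ℝ) →
        ∀ (L : ℕ) (u : Fin L → EuclideanSpace ℂ (Fin L₀)),
          (∀ l, ‖u l‖ = 1) →
          (∀ l l', l ≠ l' → ‖⟪u l, u l'⟫_ℂ‖ < δ / (L₀ : ℝ)) →
          (L : ℝ) ≤ (L₀ : ℝ) + c := by
  obtain ⟨c, hc, hcard⟩ := welch_bound_dimension_count_general ℂ δ
  refine ⟨c, hc, fun L₀ hL₀ L u hu hinner ↦ ?_⟩
  simpa using hcard (EuclideanSpace ℂ (Fin L₀)) (by rw [finrank_euclideanSpace_fin]; linarith)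
    (Fin L) u hu fun l l' hne ↦ by simpa using (hinner l l' hne).le
end

section
/- Fix a constant ε ∈ (0, 1/100). There exists a constant c > 0 such that for every integer k ≥ 0, every real number γ > 0 with k ≤ 32ε²γ, and every real number t ≥ 9ε, one has (1/k!) · (γ/2)^{k+1} · t^{2k} · exp(−γt²/2) ≤ c · exp(−γt²/c). -/
/-!
With `x = γt²/2` the quantity to bound is `γ/2` times the Poisson weight `x ^ k / k! * exp (-x)`.
The hypotheses keep `k` below a fixed fraction `θ < 1` of the mean `x`, so the Chernoff bound makes
this weight at most `exp (-(klFun θ * x))`, where `klFun θ = θ log θ + 1 - θ > 0`. Since `t` is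
bounded below, the prefactor `γ/2` is at most a constant times `x`, and half of the exponent
absorbs it.
-/

open InformationTheory (klFun klFun_apply klFun_zero klFun_nonneg klFun_eq_zero_iff)

theorem klFun_pos {θ : ℝ} (hθ0 : 0 ≤ θ) (hθ1 : θ ≠ 1) : 0 < klFun θ :=
  (klFun_nonneg hθ0).lt_of_ne' (mt (klFun_eq_zero_iff hθ0).1 hθ1)

theorem inv_pow_le_exp_neg_mul_log {θ y : ℝ} {k : ℕ} (hθ0 : 0 < θ) (hθ1 : θ ≤ 1)
    (hk : (k : ℝ) ≤ y) : θ⁻¹ ^ k ≤ Real.exp (-(y * Real.log θ)) := by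
  have hlog : Real.log θ ≤ 0 := Real.log_nonpos hθ0.le hθ1
  calc θ⁻¹ ^ k = Real.exp (-(k * Real.log θ)) := by
        rw [Real.exp_neg, Real.exp_nat_mul, Real.exp_log hθ0, inv_pow]
    _ ≤ Real.exp (-(y * Real.log θ)) :=
        Real.exp_le_exp.2 (neg_le_neg (mul_le_mul_of_nonpos_right hk hlog))

theorem pow_div_factorial_mul_exp_neg_le {θ x : ℝ} {k : ℕ} (hθ0 : 0 ≤ θ) (hθ1 : θ ≤ 1)
    (hk : (k : ℝ) ≤ θ * x) :
    x ^ k / (k.factorial : ℝ) * Real.exp (-x) ≤ Real.exp (-(klFun θ * x)) := by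
  rcases hθ0.eq_or_lt with rfl | hθ
  · obtain rfl : k = 0 := by
      rw [zero_mul] at hk
      exact_mod_cast hk.antisymm k.cast_nonneg
    simp [klFun_zero]
  have hθx : 0 ≤ θ * x := k.cast_nonneg.trans hk
  -- Chernoff's choice of tilt: compare `(θ * x) ^ k / k!`, rather than `x ^ k / k!`, with `exp`.
  calc x ^ k / (k.factorial : ℝ) * Real.exp (-x)
      = θ⁻¹ ^ k * ((θ * x) ^ k / (k.factorial : ℝ)) * Real.exp (-x) := by
        rw [← mul_div_assoc, ← mul_pow, inv_mul_cancel_left₀ hθ.ne']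
    _ ≤ Real.exp (-(θ * x * Real.log θ)) * Real.exp (θ * x) * Real.exp (-x) := by
        gcongr
        · exact inv_pow_le_exp_neg_mul_log hθ hθ1 hk
        · exact Real.pow_div_factorial_le_exp _ hθx k
    _ = Real.exp (-(klFun θ * x)) := by
        rw [← Real.exp_add, ← Real.exp_add, klFun_apply]
        ring_nf

theorem mul_exp_neg_mul_le {δ : ℝ} (hδ : 0 < δ) (x : ℝ) :
    x * Real.exp (-(δ * x)) ≤ 2 / δ * Real.exp (-(δ * x / 2)) := by
  have hexp : δ * x / 2 ≤ Real.exp (δ * x / 2) :=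
    (le_add_of_nonneg_right zero_le_one).trans (Real.add_one_le_exp _)
  calc x * Real.exp (-(δ * x))
      = 2 / δ * (δ * x / 2) * Real.exp (-(δ * x)) := by field_simp
    _ ≤ 2 / δ * Real.exp (δ * x / 2) * Real.exp (-(δ * x)) := by gcongr
    _ = 2 / δ * Real.exp (-(δ * x / 2)) := by
        rw [mul_assoc, ← Real.exp_add]
        ring_nf

theorem exists_pos_mul_exp_neg_mul_le_mul_exp_neg_div (C : ℝ) {a : ℝ} (ha : 0 < a) :
    ∃ c : ℝ, 0 < c ∧ ∀ y : ℝ, 0 ≤ y →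
      C * Real.exp (-(a * y)) ≤ c * Real.exp (-y / c) := by
  have hc : 0 < max C a⁻¹ := lt_max_of_lt_right (inv_pos.2 ha)
  refine ⟨max C a⁻¹, hc, fun y hy => ?_⟩
  have hrate : y / max C a⁻¹ ≤ a * y := by
    rw [div_eq_inv_mul]
    exact mul_le_mul_of_nonneg_right (inv_le_of_inv_le₀ ha (le_max_right _ _)) hy
  rw [neg_div]
  gcongr
  exact le_max_left _ _

/-- The squared modulus of the normalized kernel element of the two-dimensional harmonic
oscillator, scaled as `4π²|ξ_{k,m}(z)|²`, in terms of the radius `t = |z|` and `γ = k + m`. -/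
noncomputable def kernelDensity (k : ℕ) (γ t : ℝ) : ℝ :=
  (1 / (k.factorial : ℝ)) * (γ / 2) ^ (k + 1) * t ^ (2 * k) * Real.exp (-(γ * t ^ 2) / 2)

theorem kernelDensity_eq_mul_poisson_weight (k : ℕ) (γ t : ℝ) :
    kernelDensity k γ t =
      γ / 2 * ((γ * t ^ 2 / 2) ^ k / (k.factorial : ℝ) * Real.exp (-(γ * t ^ 2 / 2))) := by
  have hpow : (γ * t ^ 2 / 2) ^ k = (γ / 2) ^ k * t ^ (2 * k) := by
    rw [pow_mul, ← mul_pow, div_mul_eq_mul_div]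
  rw [kernelDensity, hpow, neg_div]
  ring

theorem kernelDensity_le {r θ γ t : ℝ} {k : ℕ} (hr : 0 < r) (hθ0 : 0 ≤ θ) (hθ1 : θ < 1)
    (hγ : 0 ≤ γ) (hk : (k : ℝ) ≤ θ * (γ * r ^ 2 / 2)) (ht : r ≤ t) :
    kernelDensity k γ t ≤
      2 / (r ^ 2 * klFun θ) * Real.exp (-(klFun θ / 4 * (γ * t ^ 2))) := by
  have hδ : 0 < klFun θ := klFun_pos hθ0 hθ1.ne
  rw [kernelDensity_eq_mul_poisson_weight]
  set x := γ * t ^ 2 / 2 with hx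
  have hrx : γ * r ^ 2 / 2 ≤ x := by rw [hx]; gcongr
  have hγx : γ / 2 ≤ x / r ^ 2 := by
    rw [le_div_iff₀ (by positivity), div_mul_eq_mul_div]
    exact hrx
  have hkx : (k : ℝ) ≤ θ * x := hk.trans (mul_le_mul_of_nonneg_left hrx hθ0)
  calc γ / 2 * (x ^ k / (k.factorial : ℝ) * Real.exp (-x))
      ≤ x / r ^ 2 * Real.exp (-(klFun θ * x)) := by
        gcongr
        exact pow_div_factorial_mul_exp_neg_le hθ0 hθ1.le hkx
    _ = (x * Real.exp (-(klFun θ * x))) / r ^ 2 := div_mul_eq_mul_div _ _ _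
    _ ≤ (2 / klFun θ * Real.exp (-(klFun θ * x / 2))) / r ^ 2 :=
        div_le_div_of_nonneg_right (mul_exp_neg_mul_le hδ x) (sq_nonneg r)
    _ = 2 / (r ^ 2 * klFun θ) * Real.exp (-(klFun θ / 4 * (γ * t ^ 2))) := by
        rw [show klFun θ * x / 2 = klFun θ / 4 * (γ * t ^ 2) by rw [hx]; ring]
        field_simp

theorem harmonic_oscillator_kernel_decay_general {r θ : ℝ} (hr : 0 < r) (hθ0 : 0 ≤ θ)
    (hθ1 : θ < 1) :
    ∃ c : ℝ, 0 < c ∧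
      ∀ (k : ℕ) (γ t : ℝ), 0 ≤ γ → (k : ℝ) ≤ θ * (γ * r ^ 2 / 2) → r ≤ t →
        kernelDensity k γ t ≤ c * Real.exp (-(γ * t ^ 2) / c) := by
  have hrate : 0 < klFun θ / 4 := div_pos (klFun_pos hθ0 hθ1.ne) four_pos
  obtain ⟨c, hc, hdecay⟩ :=
    exists_pos_mul_exp_neg_mul_le_mul_exp_neg_div (2 / (r ^ 2 * klFun θ)) hrate
  exact ⟨c, hc, fun k γ t hγ hk ht =>
    (kernelDensity_le hr hθ0 hθ1 hγ hk ht).trans (hdecay _ (by positivity))⟩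

/-- Lemma 5.11: uniform Gaussian decay of the normalized kernel elements of the
two-dimensional harmonic oscillator, for `k ≤ 32ε²γ` and `t ≥ 9ε`. -/
theorem harmonic_oscillator_kernel_decay (ε : ℝ) (hε0 : 0 < ε) (hε1 : ε < 1 / 100) :
    ∃ c : ℝ, 0 < c ∧
      ∀ (k : ℕ) (γ t : ℝ), 0 < γ → (k : ℝ) ≤ 32 * ε ^ 2 * γ → 9 * ε ≤ t →
        (1 / (Nat.factorial k : ℝ)) * (γ / 2) ^ (k + 1) * t ^ (2 * k) *
            Real.exp (-(γ * t ^ 2) / 2)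
          ≤ c * Real.exp (-(γ * t ^ 2) / c) := by
  -- `k ≤ 32ε²γ` is `k ≤ θ * (γ * r ^ 2 / 2)` for `r = 9ε` and `θ = 64 / 81`.
  obtain ⟨c, hc, hdecay⟩ := harmonic_oscillator_kernel_decay_general (r := 9 * ε) (θ := 64 / 81)
    (by positivity) (by norm_num) (by norm_num)
  exact ⟨c, hc, fun k γ t hγ hk ht => hdecay k γ t hγ.le (by linarith) ht⟩
end

section
/- There exists a constant c > 0 such that for every real number r ≥ c, the number of pairs of integers (k, m) with k ≥ 1 and γ_{k,m} ≤ r differs from (r²/4)·∫₀² Δ(ρ) dρ by at most c·r; that is, |#{(k,m) ∈ ℤ² : k ≥ 1, γ_{k,m} ≤ r} − (r²/4)∫₀² Δ(ρ) dρ| ≤ c·r. -/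
open MeasureTheory

/-!
Write `k = s f(ρ)`, `m = s g(ρ)`. For `ρ = ρ_{k,m}` this gives `s = γ_{k,m} / 2`, so the pairs with
`γ_{k,m} ≤ r` are exactly the lattice points of the planar sector
`{s (f ρ, g ρ) | 0 < s ≤ r / 2, 0 < ρ < 2}`. The coordinates `(s, ρ)` are injective because `g / f`
is strictly decreasing, and their Jacobian has absolute value `2 s Δ(ρ)`, so the sector has area
`(r² / 4) ∫ Δ`. A unit grid cell that avoids the frontier of the sector lies either inside or
outside it; the counting error is therefore at most the number of cells meeting the frontier, which
consists of an arc and two segments, all of length `O(r)`.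
-/

open Bornology Metric Set
open scoped NNReal

section Tiling

theorem subset_or_disjoint_of_disjoint_frontier {X : Type*} [TopologicalSpace X] {A s : Set X}
    (hs : IsPreconnected s) (h : Disjoint s (frontier A)) : s ⊆ A ∨ Disjoint s A := by
  have hcover : s ⊆ interior A ∪ (closure A)ᶜ := fun x hx ↦
    or_iff_not_imp_right.2 fun hxA ↦ by_contra fun hxi ↦
      disjoint_left.1 h hx ⟨not_not.1 hxA, hxi⟩
  have hdisj : Disjoint (interior A) (closure A)ᶜ :=
    disjoint_compl_right_iff_subset.2 (interior_subset.trans subset_closure)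
  refine (hs.subset_or_subset isOpen_interior isClosed_closure.isOpen_compl hdisj hcover).imp
    (fun hsub ↦ hsub.trans interior_subset) fun hsub ↦ ?_
  exact (subset_compl_iff_disjoint_right.1 hsub).mono_right subset_closure

variable {ι X : Type*} [MeasurableSpace X] {μ : Measure X} {π : X → ι}

theorem measure_preimage_eq_ncard (hmeas : ∀ i, MeasurableSet (π ⁻¹' {i}))
    (hunit : ∀ i, μ (π ⁻¹' {i}) = 1) {J : Set ι} (hJ : J.Finite) : μ (π ⁻¹' J) = J.ncard := by
  lift J to Finset ι using hJ
  simp [← sum_measure_preimage_singleton J fun i _ ↦ hmeas i, hunit]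

theorem abs_ncard_preimage_sub_measureReal_le [TopologicalSpace X] {A : Set X} {tag : ι → X}
    (htag : Function.RightInverse tag π) (hmeas : ∀ i, MeasurableSet (π ⁻¹' {i}))
    (hunit : ∀ i, μ (π ⁻¹' {i}) = 1) (hconn : ∀ i, IsPreconnected (π ⁻¹' {i}))
    (hA : (π '' A).Finite) (hfr : (π '' frontier A).Finite) :
    |((tag ⁻¹' A).ncard : ℝ) - μ.real A| ≤ (π '' frontier A).ncard := by
  set inner : Set ι := {i | π ⁻¹' {i} ⊆ A}
  set B : Set ι := π '' frontier A
  have hinner_tag : inner ⊆ tag ⁻¹' A := fun i hi ↦ hi (htag i)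
  have hinner : inner.Finite := hA.subset fun i hi ↦ ⟨tag i, hinner_tag hi, htag i⟩
  have hA_sub : A ⊆ π ⁻¹' (inner ∪ B) := fun x hx ↦ by
    refine or_iff_not_imp_right.2 fun hxB ↦ ?_
    refine (subset_or_disjoint_of_disjoint_frontier (hconn (π x)) ?_).resolve_right
      (not_disjoint_iff.2 ⟨x, rfl, hx⟩)
    exact disjoint_left.2 fun y hy hyA ↦ hxB ⟨y, hyA, hy⟩
  have htag_sub : tag ⁻¹' A ⊆ inner ∪ B := fun i hi ↦ htag i ▸ hA_sub hi
  have hfin : (inner ∪ B).Finite := hinner.union hfr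
  have hμ_inner : μ (π ⁻¹' inner) = inner.ncard := measure_preimage_eq_ncard hmeas hunit hinner
  have hμ_union : μ (π ⁻¹' (inner ∪ B)) = (inner ∪ B).ncard :=
    measure_preimage_eq_ncard hmeas hunit hfin
  have hμ_ne_top : μ (π ⁻¹' (inner ∪ B)) ≠ ⊤ :=
    hμ_union ▸ ENNReal.natCast_ne_top _
  have hcard : ((inner ∪ B).ncard : ℝ) ≤ inner.ncard + B.ncard :=
    mod_cast ncard_union_le inner B
  have hvol_lower : (inner.ncard : ℝ) ≤ μ.real A := by
    calc (inner.ncard : ℝ) = μ.real (π ⁻¹' inner) := by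
          rw [measureReal_def, hμ_inner, ENNReal.toReal_natCast]
      _ ≤ μ.real A :=
          measureReal_mono (fun x hx ↦ hx rfl) (measure_ne_top_of_subset hA_sub hμ_ne_top)
  have hvol_upper : μ.real A ≤ (inner ∪ B).ncard := by
    calc μ.real A ≤ μ.real (π ⁻¹' (inner ∪ B)) := measureReal_mono hA_sub hμ_ne_top
      _ = (inner ∪ B).ncard := by rw [measureReal_def, hμ_union, ENNReal.toReal_natCast]
  have hcount_lower : (inner.ncard : ℝ) ≤ (tag ⁻¹' A).ncard :=
    mod_cast ncard_le_ncard hinner_tag (hfin.subset htag_sub)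
  have hcount_upper : ((tag ⁻¹' A).ncard : ℝ) ≤ (inner ∪ B).ncard :=
    mod_cast ncard_le_ncard htag_sub hfin
  rw [abs_le]
  constructor <;> linarith

end Tiling

section Grid

/-- The lower-left corner of the half-open unit grid cell containing `x`: the cells of the
integer grid are the fibers of this map. -/
noncomputable def gridFloor (x : ℝ × ℝ) : ℤ × ℤ := (⌊x.1⌋, ⌊x.2⌋)

/-- The inclusion of the integer lattice in the plane; the lattice points of a region `A` are
indexed by `latticePoint ⁻¹' A`. -/
noncomputable def latticePoint (p : ℤ × ℤ) : ℝ × ℝ := (p.1, p.2)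

theorem gridFloor_rightInverse : Function.RightInverse latticePoint gridFloor := fun p ↦ by
  simp [gridFloor, latticePoint]

theorem gridFloor_mono : Monotone gridFloor := fun _ _ h ↦
  ⟨Int.floor_mono h.1, Int.floor_mono h.2⟩

theorem gridFloor_preimage_singleton (p : ℤ × ℤ) :
    gridFloor ⁻¹' {p} = Ico (p.1 : ℝ) (p.1 + 1) ×ˢ Ico (p.2 : ℝ) (p.2 + 1) := by
  ext x
  simp [gridFloor, Prod.ext_iff, Int.floor_eq_iff]

theorem finite_gridFloor_image {A : Set (ℝ × ℝ)} (hA : IsBounded A) :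
    (gridFloor '' A).Finite := by
  obtain ⟨r, hr⟩ := hA.subset_closedBall 0
  have hbox : closedBall (0 : ℝ × ℝ) r = Icc (-r, -r) (r, r) := by
    rw [Prod.zero_eq_mk, ← closedBall_prod_same, Real.closedBall_eq_Icc, Icc_prod_Icc]
    simp
  refine (finite_Icc (gridFloor (-r, -r)) (gridFloor (r, r))).subset ?_
  exact (image_mono (hr.trans hbox.subset)).trans gridFloor_mono.image_Icc_subset

theorem ncard_gridFloor_image_closedBall_le (x : ℝ × ℝ) :
    (gridFloor '' closedBall x 1).ncard ≤ 9 := by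
  have hbox : closedBall x 1 = Icc (x - 1) (x + 1) := by
    rw [← Prod.mk.eta (p := x), ← closedBall_prod_same, Real.closedBall_eq_Icc,
      Real.closedBall_eq_Icc, Icc_prod_Icc]
    rfl
  have himage : gridFloor '' closedBall x 1 ⊆
      Finset.Icc (gridFloor x - 1) (gridFloor x + 1) := by
    have hsub : gridFloor (x - 1) = gridFloor x - 1 := by simp [gridFloor, Prod.ext_iff]
    have hadd : gridFloor (x + 1) = gridFloor x + 1 := by simp [gridFloor, Prod.ext_iff]
    rw [hbox, Finset.coe_Icc, ← hsub, ← hadd]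
    exact gridFloor_mono.image_Icc_subset
  refine (ncard_le_ncard himage (Finset.finite_toSet _)).trans_eq ?_
  rw [ncard_coe_finset, Finset.card_Icc_prod, Int.card_Icc, Int.card_Icc]
  simp only [Prod.fst_add, Prod.fst_sub, Prod.snd_add, Prod.snd_sub, Prod.fst_one, Prod.snd_one]
  ring_nf
  rfl

theorem ncard_gridFloor_image_le_of_isCover {A : Set (ℝ × ℝ)} {N : Finset (ℝ × ℝ)}
    (h : IsCover 1 A N) : (gridFloor '' A).ncard ≤ 9 * N.card := by
  have hsub : gridFloor '' A ⊆ ⋃ y ∈ N, gridFloor '' closedBall y 1 := by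
    simpa only [image_iUnion, Finset.mem_coe, NNReal.coe_one]
      using image_mono (f := gridFloor) h.subset_iUnion_closedBall
  have hfin : (⋃ y ∈ N, gridFloor '' closedBall y 1).Finite :=
    N.finite_toSet.biUnion fun y _ ↦ finite_gridFloor_image isBounded_closedBall
  calc (gridFloor '' A).ncard
      ≤ (⋃ y ∈ N, gridFloor '' closedBall y 1).ncard := ncard_le_ncard hsub hfin
    _ ≤ ∑ y ∈ N, (gridFloor '' closedBall y 1).ncard := N.set_ncard_biUnion_le _
    _ ≤ N.card • 9 :=
        Finset.sum_le_card_nsmul _ _ _ fun y _ ↦ ncard_gridFloor_image_closedBall_le y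
    _ = 9 * N.card := by rw [smul_eq_mul, mul_comm]

theorem exists_isCover_image_Icc {X : Type*} [PseudoMetricSpace X] {γ : ℝ → X} {K ε : ℝ≥0}
    {a b : ℝ} (hab : a ≤ b) (hγ : LipschitzOnWith K γ (Icc a b)) (hε : 0 < ε) :
    ∃ N : Finset X, IsCover ε (γ '' Icc a b) N ∧ (N.card : ℝ) ≤ K * (b - a) / ε + 1 := by
  classical
  have hε' : (0 : ℝ) < ε := hε
  -- For `K = 0` the division is junk and all nodes are `a`, which suffices as `γ` is constant.
  set node : ℕ → ℝ := fun j ↦ a + j * ε / K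
  refine ⟨(Finset.range (⌊K * (b - a) / ε⌋₊ + 1)).image (γ ∘ node), ?_, ?_⟩
  · rw [isCover_iff_subset_iUnion_closedBall]
    rintro _ ⟨t, ht, rfl⟩
    have hta : 0 ≤ t - a := sub_nonneg.2 ht.1
    set j := ⌊K * (t - a) / ε⌋₊
    have hj_le : j * ε ≤ K * (t - a) := (le_div_iff₀ hε').1 (Nat.floor_le (by positivity))
    have hj_gt : K * (t - a) < (j + 1) * ε := (div_lt_iff₀ hε').1 (Nat.lt_floor_add_one _)
    have hj_mem : j ∈ Finset.range (⌊K * (b - a) / ε⌋₊ + 1) := by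
      rw [Finset.mem_range, Nat.lt_succ_iff]
      exact Nat.floor_le_floor (by gcongr; exact ht.2)
    have hnode_le : node j ≤ t := by
      have : (j * ε / K : ℝ) ≤ t - a := div_le_of_le_mul₀ K.2 hta (by linarith)
      simp only [node]; linarith
    have hnode_ge : a ≤ node j := le_add_of_nonneg_right (by positivity)
    have hdist : K * (t - node j) ≤ ε := by
      rcases eq_or_ne K 0 with rfl | hK
      · simp
      · have : K * (t - node j) = K * (t - a) - j * ε := by simp only [node]; field_simp; ring
        linarith
    refine mem_biUnion (Finset.mem_coe.2 (Finset.mem_image_of_mem _ hj_mem)) ?_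
    calc dist (γ t) (γ (node j)) ≤ K * dist t (node j) :=
          hγ.dist_le_mul _ ht _ ⟨hnode_ge, hnode_le.trans ht.2⟩
      _ = K * (t - node j) := by rw [Real.dist_eq, abs_of_nonneg (sub_nonneg.2 hnode_le)]
      _ ≤ ε := hdist
  · calc (((Finset.range (⌊K * (b - a) / ε⌋₊ + 1)).image (γ ∘ node)).card : ℝ)
        ≤ ⌊K * (b - a) / ε⌋₊ + 1 :=
          mod_cast Finset.card_image_le.trans_eq (Finset.card_range _)
      _ ≤ K * (b - a) / ε + 1 := by
        gcongr
        exact Nat.floor_le (div_nonneg (mul_nonneg K.2 (sub_nonneg.2 hab)) hε'.le)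

theorem ncard_gridFloor_image_curve_le {γ : ℝ → ℝ × ℝ} {K : ℝ≥0} {a b : ℝ} (hab : a ≤ b)
    (hγ : LipschitzOnWith K γ (Icc a b)) :
    ((gridFloor '' (γ '' Icc a b)).ncard : ℝ) ≤ 9 * (K * (b - a) + 1) := by
  obtain ⟨N, hcover, hcard⟩ := exists_isCover_image_Icc hab hγ one_pos
  calc ((gridFloor '' (γ '' Icc a b)).ncard : ℝ) ≤ 9 * N.card :=
        mod_cast ncard_gridFloor_image_le_of_isCover hcover
    _ ≤ 9 * (K * (b - a) + 1) := by gcongr; simpa using hcard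

theorem abs_ncard_latticePoint_preimage_sub_volume_le {A : Set (ℝ × ℝ)} (hA : IsBounded A) :
    |((latticePoint ⁻¹' A).ncard : ℝ) - volume.real A| ≤ (gridFloor '' frontier A).ncard := by
  refine abs_ncard_preimage_sub_measureReal_le gridFloor_rightInverse (fun p ↦ ?_) (fun p ↦ ?_)
    (fun p ↦ ?_) (finite_gridFloor_image hA)
    (finite_gridFloor_image (hA.closure.subset frontier_subset_closure))
  all_goals rw [gridFloor_preimage_singleton]
  · exact measurableSet_Ico.prod measurableSet_Ico
  · simp [Measure.volume_eq_prod, Measure.prod_prod]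
  · exact isPreconnected_Ico.prod isPreconnected_Ico

theorem finite_latticePoint_preimage {A : Set (ℝ × ℝ)} (hA : IsBounded A) :
    (latticePoint ⁻¹' A).Finite :=
  (finite_gridFloor_image hA).subset fun p hp ↦ ⟨latticePoint p, hp, gridFloor_rightInverse p⟩

end Grid

section Cone

variable {E : Type*} [NormedAddCommGroup E] [NormedSpace ℝ E] {γ : ℝ → E} {a b R : ℝ}

/-- Polar-type coordinates along the curve `γ`: the pair `(s, ρ)` is sent to `s • γ ρ`. -/
def coneMap (γ : ℝ → E) (p : ℝ × ℝ) : E := p.1 • γ p.2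

/-- The part of the cone over the restriction of `γ` to `(a, b)` with radial coordinate in `(0, R]`,
so that the apex is left out. -/
def coneSector (γ : ℝ → E) (a b R : ℝ) : Set E := coneMap γ '' (Ioc 0 R ×ˢ Ioo a b)

theorem isCompact_coneMap_image (hγ : ContinuousOn γ (Icc a b)) :
    IsCompact (coneMap γ '' (Icc 0 R ×ˢ Icc a b)) :=
  (isCompact_Icc.prod isCompact_Icc).image_of_continuousOn <|
    continuousOn_fst.smul (hγ.comp continuousOn_snd fun _ hp ↦ hp.2)

theorem coneSector_subset_coneMap_image :
    coneSector γ a b R ⊆ coneMap γ '' (Icc 0 R ×ˢ Icc a b) :=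
  image_mono (prod_mono Ioc_subset_Icc_self Ioo_subset_Icc_self)

theorem isBounded_coneSector (hγ : ContinuousOn γ (Icc a b)) : IsBounded (coneSector γ a b R) :=
  (isCompact_coneMap_image hγ).isBounded.subset coneSector_subset_coneMap_image

theorem smul_mem_coneSector_iff (hinj : InjOn (coneMap γ) (Ioi 0 ×ˢ Ioo a b)) {s ρ : ℝ}
    (hs : 0 < s) (hρ : ρ ∈ Ioo a b) : s • γ ρ ∈ coneSector γ a b R ↔ s ≤ R := by
  refine ⟨?_, fun hsR ↦ ⟨(s, ρ), ⟨⟨hs, hsR⟩, hρ⟩, rfl⟩⟩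
  rintro ⟨q, ⟨hq₁, hq₂⟩, hq⟩
  obtain rfl : q = (s, ρ) := hinj ⟨hq₁.1, hq₂⟩ ⟨hs, hρ⟩ hq
  exact hq₁.2

theorem frontier_coneSector_subset (hγ : ContinuousOn γ (Icc a b))
    (hopen : IsOpen (coneMap γ '' (Ioo 0 R ×ˢ Ioo a b))) :
    frontier (coneSector γ a b R) ⊆
      (R • γ ·) '' Icc a b ∪ ((· • γ a) '' Icc 0 R ∪ (· • γ b) '' Icc 0 R) := by
  intro x hx
  obtain ⟨⟨s, ρ⟩, ⟨hs, hρ⟩, rfl⟩ : x ∈ coneMap γ '' (Icc 0 R ×ˢ Icc a b) :=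
    closure_minimal coneSector_subset_coneMap_image (isCompact_coneMap_image hγ).isClosed hx.1
  have hinterior : coneMap γ '' (Ioo 0 R ×ˢ Ioo a b) ⊆ interior (coneSector γ a b R) :=
    interior_maximal (image_mono (prod_mono Ioo_subset_Ioc_self subset_rfl)) hopen
  rcases hρ.1.eq_or_lt with rfl | haρ
  · exact .inr (.inl ⟨s, hs, rfl⟩)
  rcases hρ.2.eq_or_lt with rfl | hρb
  · exact .inr (.inr ⟨s, hs, rfl⟩)
  rcases hs.1.eq_or_lt with rfl | hs0
  · exact .inr (.inl ⟨0, hs, by simp [coneMap]⟩)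
  rcases hs.2.eq_or_lt with rfl | hsR
  · exact .inl ⟨ρ, hρ, rfl⟩
  · exact absurd (hinterior ⟨(s, ρ), ⟨⟨hs0, hsR⟩, haρ, hρb⟩, rfl⟩) hx.2

theorem lipschitzWith_smul_left (x : E) : LipschitzWith ‖x‖₊ (fun s : ℝ ↦ s • x) :=
  .of_dist_le_mul fun s t ↦ by rw [dist_eq_norm, ← sub_smul, norm_smul, mul_comm]; rfl

theorem ncard_gridFloor_image_frontier_coneSector_le {γ : ℝ → ℝ × ℝ} {K : ℝ≥0} (hab : a ≤ b)
    (hR : 0 ≤ R) (hγ : LipschitzOnWith K γ (Icc a b))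
    (hopen : IsOpen (coneMap γ '' (Ioo 0 R ×ˢ Ioo a b))) :
    ((gridFloor '' frontier (coneSector γ a b R)).ncard : ℝ) ≤
      9 * ((K * (b - a) + ‖γ a‖ + ‖γ b‖) * R + 3) := by
  set arc := (R • γ ·) '' Icc a b
  set edge : ℝ → Set (ℝ × ℝ) := fun c ↦ (· • γ c) '' Icc 0 R
  have harc : ((gridFloor '' arc).ncard : ℝ) ≤ 9 * (R * K * (b - a) + 1) := by
    simpa [abs_of_nonneg hR] using
      ncard_gridFloor_image_curve_le hab ((lipschitzWith_smul R).comp_lipschitzOnWith hγ)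
  have hedge (c : ℝ) : ((gridFloor '' edge c).ncard : ℝ) ≤ 9 * (‖γ c‖ * R + 1) := by
    simpa using ncard_gridFloor_image_curve_le hR (lipschitzWith_smul_left (γ c)).lipschitzOnWith
  have hbdd : IsBounded (arc ∪ (edge a ∪ edge b)) := by
    have hedge_bdd (c : ℝ) : IsBounded (edge c) :=
      (isCompact_Icc.image (by fun_prop)).isBounded
    refine (isCompact_Icc.image_of_continuousOn ?_).isBounded.union
      ((hedge_bdd a).union (hedge_bdd b))
    exact hγ.continuousOn.const_smul R
  have hcard : (gridFloor '' frontier (coneSector γ a b R)).ncard ≤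
      (gridFloor '' arc).ncard + ((gridFloor '' edge a).ncard + (gridFloor '' edge b).ncard) := by
    refine (ncard_le_ncard (image_mono (frontier_coneSector_subset hγ.continuousOn hopen))
      (finite_gridFloor_image hbdd)).trans ?_
    rw [image_union, image_union]
    grw [ncard_union_le, ncard_union_le]
  have hcard' : ((gridFloor '' frontier (coneSector γ a b R)).ncard : ℝ) ≤
      (gridFloor '' arc).ncard + ((gridFloor '' edge a).ncard + (gridFloor '' edge b).ncard) :=
    mod_cast hcard
  linarith [hedge a, hedge b]

end Cone

section Profile

variable {f g : ℝ → ℝ} {a b R : ℝ}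

/-- The function `Δ` of the contact form `f dφ + g dt`. It is half the cross product of the
velocity and position of the curve `(f, g)`, so it is positive where the curve turns clockwise. -/
noncomputable def contactDensity (f g : ℝ → ℝ) (ρ : ℝ) : ℝ :=
  (deriv f ρ * g ρ - f ρ * deriv g ρ) / 2

theorem strictAntiOn_div_of_contactDensity_pos (hf : Differentiable ℝ f) (hg : Differentiable ℝ g)
    (hfpos : ∀ ρ ∈ Ioo a b, 0 < f ρ) (hΔpos : ∀ ρ ∈ Ioo a b, 0 < contactDensity f g ρ) :
    StrictAntiOn (fun ρ ↦ g ρ / f ρ) (Ioo a b) := by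
  have hderiv : ∀ ρ ∈ Ioo a b, HasDerivAt (fun ρ ↦ g ρ / f ρ)
      ((deriv g ρ * f ρ - g ρ * deriv f ρ) / f ρ ^ 2) ρ := fun ρ hρ ↦
    hg.differentiableAt.hasDerivAt.div hf.differentiableAt.hasDerivAt (hfpos ρ hρ).ne'
  refine strictAntiOn_of_deriv_neg (convex_Ioo a b)
    (fun ρ hρ ↦ (hderiv ρ hρ).continuousAt.continuousWithinAt) fun ρ hρ ↦ ?_
  rw [interior_Ioo] at hρ
  rw [(hderiv ρ hρ).deriv]
  refine div_neg_of_neg_of_pos ?_ (pow_pos (hfpos ρ hρ) 2)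
  have := hΔpos ρ hρ
  rw [contactDensity] at this
  linarith

theorem injOn_coneMap (hfpos : ∀ ρ ∈ Ioo a b, 0 < f ρ)
    (hslope : InjOn (fun ρ ↦ g ρ / f ρ) (Ioo a b)) :
    InjOn (coneMap (Function.prod f g)) (Ioi 0 ×ˢ Ioo a b) := by
  rintro ⟨s, ρ⟩ ⟨hs, hρ⟩ ⟨t, σ⟩ ⟨ht, hσ⟩ h
  obtain ⟨hfst, hsnd⟩ : s * f ρ = t * f σ ∧ s * g ρ = t * g σ := by
    simpa [coneMap] using h
  obtain rfl : ρ = σ := hslope hρ hσ <| by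
    simp only
    rw [← mul_div_mul_left _ _ (mem_Ioi.1 hs).ne', ← mul_div_mul_left (g σ) _ (mem_Ioi.1 ht).ne',
      hfst, hsnd]
  rw [mul_right_cancel₀ (hfpos ρ hρ).ne' hfst]

/-- The Jacobian of `coneMap` over the curve `(f, g)` at `p = (s, ρ)`: the columns are the
derivatives in `s` and in `ρ`. -/
noncomputable def coneMapDeriv (f g : ℝ → ℝ) (p : ℝ × ℝ) : ℝ × ℝ →L[ℝ] ℝ × ℝ :=
  (Matrix.toLin (.finTwoProd ℝ) (.finTwoProd ℝ)
    !![f p.2, p.1 * deriv f p.2; g p.2, p.1 * deriv g p.2]).toContinuousLinearMap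

theorem det_coneMapDeriv (p : ℝ × ℝ) :
    (coneMapDeriv f g p).det = -(2 * p.1 * contactDensity f g p.2) := by
  simp only [coneMapDeriv, contactDensity, LinearMap.det_toContinuousLinearMap,
    LinearMap.det_toLin, Matrix.det_fin_two_of]
  ring

theorem hasStrictFDerivAt_coneMap {p : ℝ × ℝ} (hf : HasStrictDerivAt f (deriv f p.2) p.2)
    (hg : HasStrictDerivAt g (deriv g p.2) p.2) :
    HasStrictFDerivAt (coneMap (Function.prod f g)) (coneMapDeriv f g p) p := by
  rw [coneMapDeriv, Matrix.toLin_finTwoProd_toContinuousLinearMap]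
  convert! HasStrictFDerivAt.prodMk (𝕜 := ℝ)
    (hasStrictFDerivAt_fst.mul (hf.comp_hasStrictFDerivAt p hasStrictFDerivAt_snd))
    (hasStrictFDerivAt_fst.mul (hg.comp_hasStrictFDerivAt p hasStrictFDerivAt_snd)) using 2 <;>
  simp [smul_smul, add_comm]

theorem isOpen_coneMap_image (hf : ContDiff ℝ 1 f) (hg : ContDiff ℝ 1 g) {U : Set (ℝ × ℝ)}
    (hU : IsOpen U) (hne : ∀ p ∈ U, p.1 ≠ 0 ∧ contactDensity f g p.2 ≠ 0) :
    IsOpen (coneMap (Function.prod f g) '' U) := by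
  rw [isOpen_iff_mem_nhds]
  rintro _ ⟨p, hp, rfl⟩
  have hdet : (coneMapDeriv f g p).det ≠ 0 := by
    simp [det_coneMapDeriv, hne p hp]
  have hstrict := hasStrictFDerivAt_coneMap (p := p)
    (hf.contDiffAt.hasStrictDerivAt one_ne_zero) (hg.contDiffAt.hasStrictDerivAt one_ne_zero)
  rw [← ContinuousLinearMap.coe_toContinuousLinearEquivOfDetNeZero _ hdet] at hstrict
  rw [← hstrict.map_nhds_eq_of_equiv]
  exact Filter.image_mem_map (hU.mem_nhds hp)

theorem volumeReal_coneSector (hf : ContDiff ℝ 1 f) (hg : ContDiff ℝ 1 g) (hab : a ≤ b)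
    (hR : 0 ≤ R) (hΔ : ∀ ρ ∈ Ioo a b, 0 ≤ contactDensity f g ρ)
    (hinj : InjOn (coneMap (Function.prod f g)) (Ioi 0 ×ˢ Ioo a b)) :
    volume.real (coneSector (Function.prod f g) a b R) =
      R ^ 2 * ∫ ρ in a..b, contactDensity f g ρ := by
  have hmeas : MeasurableSet (Ioc 0 R ×ˢ Ioo a b) := measurableSet_Ioc.prod measurableSet_Ioo
  have hderiv (p : ℝ × ℝ) (_ : p ∈ Ioc 0 R ×ˢ Ioo a b) :
      HasFDerivWithinAt (coneMap (Function.prod f g)) (coneMapDeriv f g p)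
        (Ioc 0 R ×ˢ Ioo a b) p :=
    (hasStrictFDerivAt_coneMap (hf.contDiffAt.hasStrictDerivAt one_ne_zero)
      (hg.contDiffAt.hasStrictDerivAt one_ne_zero)).hasFDerivAt.hasFDerivWithinAt
  have habs : ∀ p ∈ Ioc 0 R ×ˢ Ioo a b,
      |(coneMapDeriv f g p).det| = 2 * p.1 * contactDensity f g p.2 := fun p hp ↦ by
    rw [det_coneMapDeriv, abs_neg,
      abs_of_nonneg (mul_nonneg (mul_nonneg zero_le_two hp.1.1.le) (hΔ _ hp.2))]
  calc volume.real (coneSector (Function.prod f g) a b R)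
      = ∫ _ in coneSector (Function.prod f g) a b R, (1 : ℝ) := by simp
    _ = ∫ p in Ioc 0 R ×ˢ Ioo a b, |(coneMapDeriv f g p).det| • (1 : ℝ) :=
        integral_image_eq_integral_abs_det_fderiv_smul volume hmeas hderiv
          (hinj.mono (prod_mono Ioc_subset_Ioi_self subset_rfl)) _
    _ = ∫ p in Ioc 0 R ×ˢ Ioo a b, 2 * p.1 * contactDensity f g p.2 :=
        setIntegral_congr_fun hmeas fun p hp ↦ by simp only [habs p hp, smul_eq_mul, mul_one]
    _ = (∫ s in Ioc 0 R, 2 * s) * ∫ ρ in Ioo a b, contactDensity f g ρ := by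
        rw [Measure.volume_eq_prod]
        exact setIntegral_prod_mul (fun s ↦ 2 * s) (contactDensity f g) _ _
    _ = R ^ 2 * ∫ ρ in a..b, contactDensity f g ρ := by
        rw [← integral_Ioc_eq_integral_Ioo, ← intervalIntegral.integral_of_le hR,
          ← intervalIntegral.integral_of_le hab, intervalIntegral.integral_const_mul, integral_id]
        ring

theorem exists_abs_ncard_coneSector_sub_le (hab : a ≤ b) (hf : ContDiff ℝ 1 f)
    (hg : ContDiff ℝ 1 g) (hΔpos : ∀ ρ ∈ Ioo a b, 0 < contactDensity f g ρ)
    (hinj : InjOn (coneMap (Function.prod f g)) (Ioi 0 ×ˢ Ioo a b)) :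
    ∃ C : ℝ, ∀ R : ℝ, 1 ≤ R →
      |((latticePoint ⁻¹' coneSector (Function.prod f g) a b R).ncard : ℝ) -
          R ^ 2 * ∫ ρ in a..b, contactDensity f g ρ| ≤ C * R := by
  set γ := Function.prod f g
  obtain ⟨K, hK⟩ : ∃ K, LipschitzOnWith K γ (Icc a b) :=
    (hf.prodMk hg).contDiffOn.exists_lipschitzOnWith one_ne_zero (convex_Icc a b) isCompact_Icc
  refine ⟨9 * (K * (b - a) + ‖γ a‖ + ‖γ b‖ + 3), fun R hR ↦ ?_⟩
  have hR0 : 0 ≤ R := zero_le_one.trans hR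
  have hopen : IsOpen (coneMap γ '' (Ioo 0 R ×ˢ Ioo a b)) :=
    isOpen_coneMap_image hf hg (isOpen_Ioo.prod isOpen_Ioo) fun p hp ↦
      ⟨hp.1.1.ne', (hΔpos _ hp.2).ne'⟩
  rw [← volumeReal_coneSector hf hg hab hR0 (fun ρ hρ ↦ (hΔpos ρ hρ).le) hinj]
  calc _ ≤ ((gridFloor '' frontier (coneSector γ a b R)).ncard : ℝ) :=
        abs_ncard_latticePoint_preimage_sub_volume_le (isBounded_coneSector hK.continuousOn)
    _ ≤ 9 * ((K * (b - a) + ‖γ a‖ + ‖γ b‖) * R + 3) :=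
        ncard_gridFloor_image_frontier_coneSector_le hab hR0 hK hopen
    _ ≤ 9 * (K * (b - a) + ‖γ a‖ + ‖γ b‖ + 3) * R := by linarith

theorem latticePoint_preimage_coneSector (hfpos : ∀ ρ ∈ Ioo a b, 0 < f ρ)
    (hinj : InjOn (coneMap (Function.prod f g)) (Ioi 0 ×ˢ Ioo a b)) {rkm : ℤ → ℤ → ℝ}
    (hrkm : ∀ k m : ℤ, 1 ≤ k →
      rkm k m ∈ Ioo a b ∧ (k : ℝ) * g (rkm k m) = (m : ℝ) * f (rkm k m)) (r : ℝ) :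
    latticePoint ⁻¹' coneSector (Function.prod f g) a b (r / 2) =
      {p : ℤ × ℤ | 1 ≤ p.1 ∧ 2 * (p.1 : ℝ) / f (rkm p.1 p.2) ≤ r} := by
  have hmem (k m : ℤ) (hk : 1 ≤ k) :
      latticePoint (k, m) ∈ coneSector (Function.prod f g) a b (r / 2) ↔
        2 * (k : ℝ) / f (rkm k m) ≤ r := by
    obtain ⟨hρ, hslope⟩ := hrkm k m hk
    have hfρ := hfpos _ hρ
    have hk0 : (0 : ℝ) < k := mod_cast hk
    have hpoint : latticePoint (k, m) =
        ((k : ℝ) / f (rkm k m)) • Function.prod f g (rkm k m) := by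
      simp only [latticePoint, Function.prod_apply, Prod.smul_mk, smul_eq_mul,
        div_mul_cancel₀ _ hfρ.ne', div_mul_eq_mul_div, hslope, mul_div_cancel_right₀ _ hfρ.ne']
    rw [hpoint, smul_mem_coneSector_iff hinj (div_pos hk0 hfρ) hρ, le_div_iff₀ two_pos,
      mul_comm, mul_div_assoc]
  ext ⟨k, m⟩
  refine ⟨fun h ↦ ?_, fun h ↦ (hmem k m h.1).2 h.2⟩
  have hk : 1 ≤ k := by
    obtain ⟨⟨s, ρ⟩, ⟨hs, hρ⟩, hcone⟩ := h
    have hk_eq : s * f ρ = k := congrArg Prod.fst hcone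
    have hk0 : (0 : ℝ) < k := hk_eq ▸ mul_pos hs.1 (hfpos ρ hρ)
    exact Int.add_one_le_of_lt (mod_cast hk0)
  exact ⟨hk, (hmem k m hk).1 h⟩

end Profile

theorem lattice_count_gamma_le_r_general {a b : ℝ} {f g : ℝ → ℝ} (hf : ContDiff ℝ 1 f)
    (hg : ContDiff ℝ 1 g) (hfpos : ∀ ρ ∈ Ioo a b, 0 < f ρ)
    (hΔpos : ∀ ρ ∈ Ioo a b, 0 < (deriv f ρ * g ρ - f ρ * deriv g ρ) / 2)
    {rkm : ℤ → ℤ → ℝ}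
    (hrkm : ∀ k m : ℤ, 1 ≤ k →
      rkm k m ∈ Ioo a b ∧ (k : ℝ) * g (rkm k m) = (m : ℝ) * f (rkm k m)) :
    ∃ c : ℝ, 0 < c ∧ ∀ r : ℝ, c ≤ r →
      {p : ℤ × ℤ | 1 ≤ p.1 ∧ 2 * (p.1 : ℝ) / f (rkm p.1 p.2) ≤ r}.Finite ∧
      |({p : ℤ × ℤ | 1 ≤ p.1 ∧ 2 * (p.1 : ℝ) / f (rkm p.1 p.2) ≤ r}.ncard : ℝ) -
          r ^ 2 / 4 * ∫ ρ in a..b, (deriv f ρ * g ρ - f ρ * deriv g ρ) / 2| ≤ c * r := by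
  have hab : a ≤ b := nonempty_Ioo.1 ⟨_, (hrkm 1 0 le_rfl).1⟩ |>.le
  have hinj : InjOn (coneMap (Function.prod f g)) (Ioi 0 ×ˢ Ioo a b) :=
    injOn_coneMap hfpos (strictAntiOn_div_of_contactDensity_pos (hf.differentiable one_ne_zero)
      (hg.differentiable one_ne_zero) hfpos hΔpos).injOn
  obtain ⟨C, hC⟩ := exists_abs_ncard_coneSector_sub_le hab hf hg hΔpos hinj
  refine ⟨max C 2, by positivity, fun r hr ↦ ?_⟩
  have hr2 : 2 ≤ r := (le_max_right C 2).trans hr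
  rw [← latticePoint_preimage_coneSector hfpos hinj hrkm r]
  refine ⟨finite_latticePoint_preimage (isBounded_coneSector
    (hf.continuous.prodMk hg.continuous).continuousOn), ?_⟩
  have hscale : r ^ 2 / 4 = (r / 2) ^ 2 := by ring
  rw [hscale]
  calc _ ≤ C * (r / 2) := hC (r / 2) (by linarith)
    _ ≤ max C 2 * r := by
      gcongr
      · exact le_max_left C 2
      · linarith

/-- Lattice point count underlying Theorem 4.9: the number of integer pairs `(k,m)` with
`k ≥ 1` and `γ_{k,m} ≤ r` equals `(r²/4)·∫₀² Δ` up to an error of order `r`. -/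
theorem lattice_count_gamma_le_r
    (ε : ℝ) (hε0 : 0 < ε) (hε1 : ε < 1 / 100)
    (f g : ℝ → ℝ) (hf : ContDiff ℝ (⊤ : ℕ∞) f) (hg : ContDiff ℝ (⊤ : ℕ∞) g)
    (hfg0 : ∀ ρ ∈ Set.Icc (0 : ℝ) (10 * ε), f ρ = ρ ^ 2 ∧ g ρ = 2 - ρ ^ 2)
    (hfg2 : ∀ ρ ∈ Set.Icc (2 - 10 * ε) (2 : ℝ), f ρ = (2 - ρ) ^ 2 ∧ g ρ = -2 + (2 - ρ) ^ 2)
    (hfpos : ∀ ρ ∈ Set.Ioo (0 : ℝ) 2, 0 < f ρ)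
    (hΔpos : ∀ ρ ∈ Set.Ioo (0 : ℝ) 2, 0 < (deriv f ρ * g ρ - f ρ * deriv g ρ) / 2)
    (rkm : ℤ → ℤ → ℝ)
    (hrkm : ∀ k m : ℤ, 1 ≤ k →
      rkm k m ∈ Set.Ioo (0 : ℝ) 2 ∧ (k : ℝ) * g (rkm k m) = (m : ℝ) * f (rkm k m)) :
    ∃ c : ℝ, 0 < c ∧ ∀ r : ℝ, c ≤ r →
      {p : ℤ × ℤ | 1 ≤ p.1 ∧ 2 * (p.1 : ℝ) / f (rkm p.1 p.2) ≤ r}.Finite ∧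
      |({p : ℤ × ℤ | 1 ≤ p.1 ∧ 2 * (p.1 : ℝ) / f (rkm p.1 p.2) ≤ r}.ncard : ℝ) -
          r ^ 2 / 4 * ∫ ρ in (0 : ℝ)..2, (deriv f ρ * g ρ - f ρ * deriv g ρ) / 2|
        ≤ c * r :=
  lattice_count_gamma_le_r_general (hf.of_le (mod_cast le_top)) (hg.of_le (mod_cast le_top))
    hfpos hΔpos hrkm
end

section
/- There exists a constant c > 0 such that for every real number r ≥ c, the number of pairs of integers (k, m) with k ≥ 1, m ≥ k/V and γ_{k,m} ≤ r differs from (r²/4)·∫₀¹ Δ(ρ) dρ by at most c·r; that is, |#{(k,m) ∈ ℤ² : k ≥ 1, m ≥ k/V, γ_{k,m} ≤ r} − (r²/4)∫₀¹ Δ(ρ) dρ| ≤ c·r. -/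
open MeasureTheory

/-!
The point `(k, m)` equals `(k / f ρ) • (f ρ, g ρ)` with `ρ = ρ_{k,m}`. Hence `γ_{k,m} ≤ r` together
with `m ≥ k / V`, which says `ρ ≤ 1` because `g / f` decreases, puts `(k, m)` in `r / 2` times the
sector `{t • (f ρ, g ρ) | 0 < t ≤ 1, 0 < ρ ≤ 1}`. In the coordinates `(t, ρ)` the area form is
`2 t Δ(ρ) dt dρ`, so this sector has area `∫₀¹ Δ`. Its boundary consists of finitely many Lipschitz
curves, and the error in counting lattice points is at most the area of a tube of fixed width around
the dilated boundary, which grows linearly in `r`.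
-/

open Set Metric Module
open scoped Pointwise NNReal

section TubeGrowth

lemma measure_cthickening_finset_le {E : Type*} [NormedAddCommGroup E] [MeasurableSpace E]
    [BorelSpace E] {μ : Measure E} [μ.IsAddHaarMeasure] (Z : Finset E) {δ : ℝ} (hδ : 0 ≤ δ) :
    μ (cthickening δ (Z : Set E)) ≤ Z.card * μ (closedBall 0 δ) := by
  rw [Z.finite_toSet.isCompact.cthickening_eq_biUnion_closedBall hδ]
  calc μ (⋃ z ∈ Z, closedBall z δ) ≤ ∑ z ∈ Z, μ (closedBall z δ) := measure_biUnion_finset_le _ _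
    _ = Z.card * μ (closedBall 0 δ) := by
      simp only [μ.addHaar_closedBall_center, Finset.sum_const, nsmul_eq_mul]

variable {E : Type*} [NormedAddCommGroup E] [NormedSpace ℝ E]

-- The net consists of the images of the points `a + j / R`, which have spacing `1 / R`.
lemma exists_finset_smul_image_Icc_subset_cthickening {K : ℝ≥0} {γ : ℝ → E} {a b : ℝ}
    (hab : a ≤ b) (hγ : LipschitzOnWith K γ (Icc a b)) {R : ℝ} (hR : 1 ≤ R) :
    ∃ Z : Finset E, (Z.card : ℝ) ≤ (b - a + 1) * R ∧
      R • γ '' Icc a b ⊆ cthickening K (Z : Set E) := by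
  classical
  have hR0 : 0 < R := one_pos.trans_le hR
  have hba : 0 ≤ (b - a) * R := mul_nonneg (sub_nonneg.2 hab) hR0.le
  refine ⟨(Finset.range (⌊(b - a) * R⌋₊ + 1)).image fun j : ℕ => R • γ (a + j / R), ?_, ?_⟩
  · calc _ ≤ ((⌊(b - a) * R⌋₊ + 1 : ℕ) : ℝ) := by
          exact_mod_cast Finset.card_image_le.trans_eq (Finset.card_range _)
      _ ≤ (b - a) * R + 1 := by push_cast; gcongr; exact Nat.floor_le hba
      _ ≤ (b - a + 1) * R := by linarith
  · rintro _ ⟨_, ⟨s, hs, rfl⟩, rfl⟩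
    set j := ⌊(s - a) * R⌋₊
    have hj_le : j / R ≤ s - a := by
      rw [div_le_iff₀ hR0]
      exact Nat.floor_le (mul_nonneg (sub_nonneg.2 hs.1) hR0.le)
    have hj_gt : s - a < j / R + 1 / R := by
      rw [← add_div, lt_div_iff₀ hR0]
      exact Nat.lt_floor_add_one _
    have hnet : a + j / R ∈ Icc a b :=
      ⟨le_add_of_nonneg_right (by positivity), by linarith [hs.2]⟩
    have hdist : dist s (a + j / R) ≤ 1 / R := by
      rw [Real.dist_eq, abs_le]
      constructor <;> linarith [one_div_pos.2 hR0]
    refine mem_cthickening_of_dist_le _ (R • γ (a + j / R)) _ _ ?_ ?_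
    · refine Finset.mem_coe.2 (Finset.mem_image_of_mem _ (Finset.mem_range_succ_iff.2 ?_))
      exact Nat.floor_le_floor (by gcongr; exact hs.2)
    · calc dist (R • γ s) (R • γ (a + j / R)) = R * dist (γ s) (γ (a + j / R)) := by
            rw [dist_smul₀, Real.norm_of_nonneg hR0.le]
        _ ≤ R * (K * (1 / R)) := by
            gcongr
            exact (hγ.dist_le_mul s hs _ hnet).trans (by gcongr)
        _ = K := by field_simp

variable [MeasurableSpace E]

/-- Tubes of any fixed width around the dilates `R • S` have measure `O(R ^ n)` as `R` grows. For
compact `S` this amounts to finiteness of the upper `n`-dimensional Minkowski content of `S`. -/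
def HasTubeGrowth (μ : Measure E) (n : ℕ) (S : Set E) : Prop :=
  ∀ δ : ℝ, ∃ C : ℝ≥0, ∀ R : ℝ, 1 ≤ R → μ (cthickening δ (R • S)) ≤ C * ENNReal.ofReal (R ^ n)

variable {μ : Measure E} {n : ℕ} {S T : Set E}

namespace HasTubeGrowth

lemma mono (hT : HasTubeGrowth μ n T) (hST : S ⊆ T) : HasTubeGrowth μ n S := by
  intro δ
  obtain ⟨C, hC⟩ := hT δ
  refine ⟨C, fun R hR => (measure_mono ?_).trans (hC R hR)⟩
  exact cthickening_subset_of_subset δ (smul_set_mono hST)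

lemma union (hS : HasTubeGrowth μ n S) (hT : HasTubeGrowth μ n T) :
    HasTubeGrowth μ n (S ∪ T) := by
  intro δ
  obtain ⟨C, hC⟩ := hS δ
  obtain ⟨D, hD⟩ := hT δ
  refine ⟨C + D, fun R hR => ?_⟩
  rw [smul_set_union, cthickening_union, ENNReal.coe_add, add_mul]
  exact (measure_union_le _ _).trans (add_le_add (hC R hR) (hD R hR))

end HasTubeGrowth

lemma hasTubeGrowth_one_image_Icc_of_lipschitzOnWith [BorelSpace E] [FiniteDimensional ℝ E]
    [μ.IsAddHaarMeasure] {K : ℝ≥0} {γ : ℝ → E} {a b : ℝ} (hab : a ≤ b)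
    (hγ : LipschitzOnWith K γ (Icc a b)) : HasTubeGrowth μ 1 (γ '' Icc a b) := by
  intro δ
  set ball := closedBall (0 : E) (max δ 0 + K)
  have hball : μ ball ≠ ⊤ := isBounded_closedBall.measure_lt_top.ne
  refine ⟨(b - a + 1).toNNReal * (μ ball).toNNReal, fun R hR => ?_⟩
  obtain ⟨Z, hZ_card, hZ⟩ := exists_finset_smul_image_Icc_subset_cthickening hab hγ hR
  have hsub : cthickening δ (R • γ '' Icc a b) ⊆ cthickening (max δ 0 + K) (Z : Set E) :=
    calc cthickening δ (R • γ '' Icc a b)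
        ⊆ cthickening (max δ 0) (cthickening K (Z : Set E)) :=
          (cthickening_mono (le_max_left _ _) _).trans (cthickening_subset_of_subset _ hZ)
      _ ⊆ cthickening (max δ 0 + K) (Z : Set E) :=
          cthickening_cthickening_subset (le_max_right _ _) K.2 _
  calc μ (cthickening δ (R • γ '' Icc a b))
      ≤ Z.card * μ ball :=
        (measure_mono hsub).trans (measure_cthickening_finset_le Z (by positivity))
    _ ≤ ENNReal.ofReal ((b - a + 1) * R) * μ ball := by
        gcongr
        exact (ENNReal.ofReal_natCast _).symm.trans_le (ENNReal.ofReal_le_ofReal hZ_card)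
    _ = ((b - a + 1).toNNReal * (μ ball).toNNReal : ℝ≥0) * ENNReal.ofReal (R ^ 1) := by
        rw [ENNReal.ofReal_mul (by linarith), ENNReal.coe_mul, ENNReal.coe_toNNReal hball, pow_one,
          mul_right_comm]
        rfl

end TubeGrowth

section LatticeCount

lemma dist_le_of_neg_vadd_mem {E : Type*} [NormedAddCommGroup E] {Λ : AddSubgroup E} {F : Set E}
    {δ : ℝ} (hFδ : F ⊆ closedBall 0 δ) {v : Λ} {x : E} (hx : -v +ᵥ x ∈ F) : dist x v ≤ δ := by
  simpa [AddSubgroup.vadd_def, dist_eq_norm, neg_add_eq_sub] using hFδ hx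

variable {E : Type*} [NormedAddCommGroup E] [NormedSpace ℝ E] [FiniteDimensional ℝ E]

lemma mem_cthickening_frontier_of_mem_of_notMem {B : Set E} {x y : E} {δ : ℝ} (hx : x ∈ B)
    (hy : y ∉ B) (hxy : dist x y ≤ δ) : x ∈ cthickening δ (frontier B) := by
  obtain ⟨z, hz, hxz⟩ :=
    exists_mem_frontier_infDist_compl_eq_dist hx ((ne_univ_iff_exists_notMem B).2 ⟨y, hy⟩)
  refine mem_cthickening_of_dist_le x z δ _ hz ?_
  exact hxz.ge.trans ((infDist_le_dist_of_mem hy).trans hxy)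

variable {Λ : AddSubgroup E} {F B : Set E}

lemma iUnion_vadd_subset_union_cthickening_frontier {δ : ℝ} (hFδ : F ⊆ closedBall 0 δ) :
    ⋃ v : Λ, ⋃ _ : (v : E) ∈ B, v +ᵥ F ⊆ B ∪ cthickening δ (frontier B) := by
  intro x hx
  obtain ⟨v, hv, hxv⟩ := mem_iUnion₂.1 hx
  refine or_iff_not_imp_left.2 fun hxB => ?_
  have hdist := dist_le_of_neg_vadd_mem hFδ (mem_vadd_set_iff_neg_vadd_mem.1 hxv)
  simpa only [frontier_compl] using
    mem_cthickening_frontier_of_mem_of_notMem (B := Bᶜ) hxB (not_not.2 hv) hdist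

lemma finite_inter_of_isBounded_of_discrete [DiscreteTopology Λ] (hB : Bornology.IsBounded B) :
    (B ∩ Λ).Finite :=
  finite_isBounded_inter_isClosed DiscreteTopology.isDiscrete hB AddSubgroup.isClosed_of_discrete

variable [MeasurableSpace E] {μ : Measure E}

lemma ae_le_iUnion_vadd_union_cthickening_frontier (hF : IsAddFundamentalDomain Λ F μ) {δ : ℝ}
    (hFδ : F ⊆ closedBall 0 δ) :
    B ≤ᵐ[μ] ((⋃ v : Λ, ⋃ _ : (v : E) ∈ B, v +ᵥ F) ∪ cthickening δ (frontier B) : Set E) := by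
  filter_upwards [hF.ae_covers] with x ⟨w, hw⟩ hxB
  rw [← neg_neg w] at hw
  by_cases hv : ((-w : Λ) : E) ∈ B
  · exact Or.inl (mem_iUnion₂.2 ⟨-w, hv, mem_vadd_set_iff_neg_vadd_mem.2 hw⟩)
  · exact Or.inr
      (mem_cthickening_frontier_of_mem_of_notMem hxB hv (dist_le_of_neg_vadd_mem hFδ hw))

variable [DiscreteTopology Λ] [BorelSpace E] [μ.IsAddHaarMeasure]

lemma measureReal_iUnion_vadd_eq_ncard_mul (hF : IsAddFundamentalDomain Λ F μ) (hFμ : μ F ≠ ⊤)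
    (hB : Bornology.IsBounded B) :
    μ.real (⋃ v : Λ, ⋃ _ : (v : E) ∈ B, v +ᵥ F) = (B ∩ Λ).ncard * μ.real F := by
  have himage : Subtype.val '' ((↑) ⁻¹' B : Set Λ) = B ∩ Λ := by
    rw [image_preimage_eq_inter_range, Subtype.range_coe]
  have hfin : ((↑) ⁻¹' B : Set Λ).Finite :=
    .of_finite_image (himage ▸ finite_inter_of_isBounded_of_discrete hB)
      Subtype.val_injective.injOn
  have hcard : hfin.toFinset.card = (B ∩ Λ).ncard := by
    rw [← ncard_eq_toFinset_card _ hfin, ← himage,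
      ncard_image_of_injective _ Subtype.val_injective]
  have hunion : ⋃ v : Λ, ⋃ _ : (v : E) ∈ B, v +ᵥ F = ⋃ v ∈ hfin.toFinset, v +ᵥ F := by
    simp
  rw [hunion, measureReal_biUnion_finset₀ (fun v _ w _ hvw => hF.aedisjoint hvw)
    (fun v _ => hF.nullMeasurableSet_vadd v) (fun v _ => by rwa [measure_vadd])]
  simp [measureReal_def, hcard]

lemma abs_ncard_mul_sub_measureReal_le (hF : IsAddFundamentalDomain Λ F μ) {δ : ℝ}
    (hFδ : F ⊆ closedBall 0 δ) (hB : Bornology.IsBounded B) :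
    |(B ∩ Λ).ncard * μ.real F - μ.real B| ≤ μ.real (cthickening δ (frontier B)) := by
  set T := cthickening δ (frontier B)
  have hFμ : μ F ≠ ⊤ := ((measure_mono hFδ).trans_lt isBounded_closedBall.measure_lt_top).ne
  have hBTμ : μ (B ∪ T) ≠ ⊤ :=
    (hB.union (hB.closure.subset frontier_subset_closure).cthickening).measure_lt_top.ne
  have hU_sub := iUnion_vadd_subset_union_cthickening_frontier (Λ := Λ) (B := B) hFδ
  have hB_sub := ae_le_iUnion_vadd_union_cthickening_frontier (B := B) hF hFδ
  rw [← measureReal_iUnion_vadd_eq_ncard_mul hF hFμ hB]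
  set U := ⋃ v : Λ, ⋃ _ : (v : E) ∈ B, v +ᵥ F
  have hUTμ : μ (U ∪ T) ≠ ⊤ :=
    measure_ne_top_of_subset (union_subset hU_sub subset_union_right) hBTμ
  have hU_le : μ.real U ≤ μ.real B + μ.real T :=
    (measureReal_mono hU_sub hBTμ).trans (measureReal_union_le _ _)
  have hB_le : μ.real B ≤ μ.real U + μ.real T :=
    (ENNReal.toReal_mono hUTμ (measure_mono_ae hB_sub)).trans (measureReal_union_le _ _)
  rw [abs_sub_le_iff]
  constructor <;> linarith

lemma exists_abs_ncard_smul_mul_sub_le (hF : IsAddFundamentalDomain Λ F μ)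
    (hFb : Bornology.IsBounded F) {A : Set E} (hA : Bornology.IsBounded A) {n : ℕ}
    (hfr : HasTubeGrowth μ n (frontier A)) :
    ∃ C : ℝ, 0 ≤ C ∧ ∀ R : ℝ, 1 ≤ R →
      |(R • A ∩ Λ).ncard * μ.real F - R ^ finrank ℝ E * μ.real A| ≤ C * R ^ n := by
  obtain ⟨δ, hδ⟩ := hFb.subset_closedBall 0
  obtain ⟨C, hC⟩ := hfr δ
  refine ⟨C, C.2, fun R hR => ?_⟩
  have hR0 : 0 < R := one_pos.trans_le hR
  have hfrontier : frontier (R • A) = R • frontier A :=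
    ((Homeomorph.smulOfNeZero (α := E) R hR0.ne').image_frontier A).symm
  have hvol : μ.real (R • A) = R ^ finrank ℝ E * μ.real A := by
    rw [measureReal_def, μ.addHaar_smul_of_nonneg hR0.le, ENNReal.toReal_mul,
      ENNReal.toReal_ofReal (by positivity), measureReal_def]
  calc |(R • A ∩ Λ).ncard * μ.real F - R ^ finrank ℝ E * μ.real A|
      ≤ μ.real (cthickening δ (R • frontier A)) := by
        rw [← hvol, ← hfrontier]
        exact abs_ncard_mul_sub_measureReal_le hF hδ (hA.smul₀ R)
    _ ≤ C * R ^ n := ENNReal.toReal_le_of_le_ofReal (by positivity) (by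
        rw [ENNReal.ofReal_mul C.coe_nonneg, ENNReal.ofReal_coe_nnreal]
        exact hC R hR)

end LatticeCount

lemma coe_span_int_range_finTwoProd :
    (Submodule.span ℤ (range (Basis.finTwoProd ℝ)) : Set (ℝ × ℝ)) =
      range (Prod.map Int.cast Int.cast : ℤ × ℤ → ℝ × ℝ) := by
  ext ⟨x, y⟩
  rw [SetLike.mem_coe, Basis.mem_span_iff_repr_mem]
  simp [Fin.forall_fin_two]

lemma fundamentalDomain_finTwoProd :
    ZSpan.fundamentalDomain (Basis.finTwoProd ℝ) = Ico 0 1 ×ˢ Ico 0 1 := by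
  ext x
  simp [ZSpan.mem_fundamentalDomain, Fin.forall_fin_two]

lemma injective_prodMap_intCast :
    (Prod.map Int.cast Int.cast : ℤ × ℤ → ℝ × ℝ).Injective :=
  Int.cast_injective.prodMap Int.cast_injective

lemma image_preimage_prodMap_intCast (B : Set (ℝ × ℝ)) :
    Prod.map Int.cast Int.cast '' (Prod.map Int.cast Int.cast ⁻¹' B : Set (ℤ × ℤ)) =
      B ∩ (Submodule.span ℤ (range (Basis.finTwoProd ℝ))).toAddSubgroup := by
  rw [image_preimage_eq_inter_range, Submodule.coe_toAddSubgroup, coe_span_int_range_finTwoProd]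

lemma finite_preimage_prodMap_intCast {B : Set (ℝ × ℝ)} (hB : Bornology.IsBounded B) :
    (Prod.map Int.cast Int.cast ⁻¹' B : Set (ℤ × ℤ)).Finite := by
  refine .of_finite_image ?_ injective_prodMap_intCast.injOn
  rw [image_preimage_prodMap_intCast]
  exact finite_inter_of_isBounded_of_discrete hB

lemma exists_abs_ncard_preimage_smul_sub_le {A : Set (ℝ × ℝ)} (hA : Bornology.IsBounded A)
    {n : ℕ} (hfr : HasTubeGrowth volume n (frontier A)) :
    ∃ C : ℝ, 0 ≤ C ∧ ∀ R : ℝ, 1 ≤ R →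
      |((Prod.map Int.cast Int.cast ⁻¹' (R • A) : Set (ℤ × ℤ)).ncard : ℝ) -
          R ^ 2 * volume.real A| ≤ C * R ^ n := by
  obtain ⟨C, hC0, hC⟩ := exists_abs_ncard_smul_mul_sub_le
    (ZSpan.isAddFundamentalDomain' (Basis.finTwoProd ℝ) volume)
    (ZSpan.fundamentalDomain_isBounded _) hA hfr
  have hvol : volume.real (ZSpan.fundamentalDomain (Basis.finTwoProd ℝ)) = 1 := by
    simp [fundamentalDomain_finTwoProd, measureReal_def, Measure.volume_eq_prod]
  refine ⟨C, hC0, fun R hR => ?_⟩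
  rw [← ncard_image_of_injective _ injective_prodMap_intCast, image_preimage_prodMap_intCast]
  simpa [hvol] using hC R hR

section Sector

/-- The polar-type parametrisation `(t, ρ) ↦ t • (f ρ, g ρ)` of the cone over the curve `(f, g)`. -/
def sectorMap (f g : ℝ → ℝ) (p : ℝ × ℝ) : ℝ × ℝ := (p.1 * f p.2, p.1 * g p.2)

/-- The region swept out by the segments from the origin to the points of the curve `(f, g)` with
parameter in `(a, b]`. The origin is left out, so that `sectorMap` is injective over it. -/
def sector (f g : ℝ → ℝ) (a b : ℝ) : Set (ℝ × ℝ) := sectorMap f g '' (Ioc 0 1 ×ˢ Ioc a b)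

/-- The function `Δ = (f' g - f g') / 2`: the rate at which the segment from the origin to
`(f ρ, g ρ)` sweeps out area, with clockwise motion counted positively. -/
noncomputable def sectorDensity (f g : ℝ → ℝ) (ρ : ℝ) : ℝ :=
  (deriv f ρ * g ρ - f ρ * deriv g ρ) / 2

/-- The total derivative of `sectorMap`, given by its Jacobian matrix. -/
noncomputable def sectorMapDeriv (f g : ℝ → ℝ) (p : ℝ × ℝ) : ℝ × ℝ →L[ℝ] ℝ × ℝ :=
  (Matrix.toLin (.finTwoProd ℝ) (.finTwoProd ℝ)
    !![f p.2, p.1 * deriv f p.2; g p.2, p.1 * deriv g p.2]).toContinuousLinearMap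

variable {f g : ℝ → ℝ}

lemma det_sectorMapDeriv (p : ℝ × ℝ) :
    (sectorMapDeriv f g p).det = -(2 * p.1 * sectorDensity f g p.2) := by
  simp only [sectorMapDeriv, sectorDensity, LinearMap.det_toContinuousLinearMap,
    LinearMap.det_toLin, Matrix.det_fin_two_of]
  ring

lemma hasFDerivAt_sectorMap (hf : Differentiable ℝ f) (hg : Differentiable ℝ g) (p : ℝ × ℝ) :
    HasFDerivAt (sectorMap f g) (sectorMapDeriv f g p) p := by
  rw [sectorMapDeriv, Matrix.toLin_finTwoProd_toContinuousLinearMap]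
  convert!
    HasFDerivAt.prodMk (𝕜 := ℝ)
      (hasFDerivAt_fst.mul ((hf p.2).hasDerivAt.comp_hasFDerivAt p hasFDerivAt_snd))
      (hasFDerivAt_fst.mul ((hg p.2).hasDerivAt.comp_hasFDerivAt p hasFDerivAt_snd)) using 2 <;>
  simp [smul_smul, add_comm]

lemma contDiff_sectorMap {n : WithTop ℕ∞} (hf : ContDiff ℝ n f) (hg : ContDiff ℝ n g) :
    ContDiff ℝ n (sectorMap f g) := by
  unfold sectorMap
  fun_prop

lemma sector_subset_image_Icc (a b : ℝ) :
    sector f g a b ⊆ sectorMap f g '' (Icc 0 1 ×ˢ Icc a b) :=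
  image_mono (prod_mono Ioc_subset_Icc_self Ioc_subset_Icc_self)

lemma isCompact_sectorMap_image_Icc (hf : Continuous f) (hg : Continuous g) (a b : ℝ) :
    IsCompact (sectorMap f g '' (Icc 0 1 ×ˢ Icc a b)) :=
  (isCompact_Icc.prod isCompact_Icc).image (by unfold sectorMap; fun_prop)

lemma isBounded_sector (hf : Continuous f) (hg : Continuous g) (a b : ℝ) :
    Bornology.IsBounded (sector f g a b) :=
  (isCompact_sectorMap_image_Icc hf hg a b).isBounded.subset (sector_subset_image_Icc a b)

lemma sectorMap_image_mem_nhds (hf : ContDiff ℝ 1 f) (hg : ContDiff ℝ 1 g) {p : ℝ × ℝ}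
    {s : Set (ℝ × ℝ)} (hs : s ∈ nhds p) (hp : p.1 ≠ 0) (hΔ : sectorDensity f g p.2 ≠ 0) :
    sectorMap f g '' s ∈ nhds (sectorMap f g p) := by
  have hdet : (sectorMapDeriv f g p).det ≠ 0 := by
    rw [det_sectorMapDeriv]
    exact neg_ne_zero.2 (mul_ne_zero (mul_ne_zero two_ne_zero hp) hΔ)
  have hstrict : HasStrictFDerivAt (sectorMap f g)
      ((sectorMapDeriv f g p).toContinuousLinearEquivOfDetNeZero hdet : ℝ × ℝ →L[ℝ] ℝ × ℝ) p :=
    (contDiff_sectorMap hf hg).contDiffAt.hasStrictFDerivAt'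
      (hasFDerivAt_sectorMap (hf.differentiable one_ne_zero) (hg.differentiable one_ne_zero) p)
      one_ne_zero
  rw [← hstrict.map_nhds_eq_of_equiv]
  exact Filter.image_mem_map hs

variable {a b : ℝ}

lemma frontier_sector_subset (hf : ContDiff ℝ 1 f) (hg : ContDiff ℝ 1 g)
    (hΔ : ∀ ρ ∈ Ioo a b, sectorDensity f g ρ ≠ 0) :
    frontier (sector f g a b) ⊆
      ((fun t => sectorMap f g (t, a)) '' Icc 0 1 ∪
          (fun t => sectorMap f g (t, b)) '' Icc 0 1) ∪
        ((fun ρ => sectorMap f g (0, ρ)) '' Icc a b ∪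
          (fun ρ => sectorMap f g (1, ρ)) '' Icc a b) := by
  intro y hy
  obtain ⟨⟨t, ρ⟩, ⟨ht, hρ⟩, rfl⟩ : y ∈ sectorMap f g '' (Icc 0 1 ×ˢ Icc a b) :=
    closure_minimal (sector_subset_image_Icc a b)
      (isCompact_sectorMap_image_Icc hf.continuous hg.continuous a b).isClosed hy.1
  rcases eq_endpoints_or_mem_Ioo_of_mem_Icc ht with rfl | rfl | ht'
  · exact Or.inr (Or.inl (mem_image_of_mem _ hρ))
  · exact Or.inr (Or.inr (mem_image_of_mem _ hρ))
  rcases eq_endpoints_or_mem_Ioo_of_mem_Icc hρ with rfl | rfl | hρ'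
  · exact Or.inl (Or.inl (mem_image_of_mem _ ht))
  · exact Or.inl (Or.inr (mem_image_of_mem _ ht))
  have hnhds : Ioc 0 1 ×ˢ Ioc a b ∈ nhds (t, ρ) :=
    prod_mem_nhds (Ioc_mem_nhds ht'.1 ht'.2) (Ioc_mem_nhds hρ'.1 hρ'.2)
  exact absurd (mem_interior_iff_mem_nhds.2
    (sectorMap_image_mem_nhds hf hg hnhds ht'.1.ne' (hΔ ρ hρ'))) hy.2

lemma hasTubeGrowth_one_frontier_sector (hf : ContDiff ℝ 1 f) (hg : ContDiff ℝ 1 g)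
    (hab : a ≤ b) (hΔ : ∀ ρ ∈ Ioo a b, sectorDensity f g ρ ≠ 0) :
    HasTubeGrowth volume 1 (frontier (sector f g a b)) := by
  have hmap := contDiff_sectorMap hf hg
  have hcurve {γ : ℝ → ℝ × ℝ} (hγ : ContDiff ℝ 1 γ) {c d : ℝ} (hcd : c ≤ d) :
      HasTubeGrowth volume 1 (γ '' Icc c d) := by
    obtain ⟨K, hK⟩ :=
      hγ.contDiffOn.exists_lipschitzOnWith one_ne_zero (convex_Icc c d) isCompact_Icc
    exact hasTubeGrowth_one_image_Icc_of_lipschitzOnWith hcd hK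
  refine HasTubeGrowth.mono ?_ (frontier_sector_subset hf hg hΔ)
  exact ((hcurve (by fun_prop) zero_le_one).union (hcurve (by fun_prop) zero_le_one)).union
    ((hcurve (by fun_prop) hab).union (hcurve (by fun_prop) hab))

lemma volume_real_sector (hf : Differentiable ℝ f) (hg : Differentiable ℝ g) (hab : a ≤ b)
    (hΔ : ∀ ρ ∈ Ioc a b, 0 ≤ sectorDensity f g ρ)
    (hinj : InjOn (sectorMap f g) (Ioc 0 1 ×ˢ Ioc a b)) :
    volume.real (sector f g a b) = ∫ ρ in a..b, sectorDensity f g ρ := by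
  have hmeas : MeasurableSet (Ioc (0 : ℝ) 1 ×ˢ Ioc a b) := measurableSet_Ioc.prod measurableSet_Ioc
  calc volume.real (sector f g a b) = ∫ _ in sector f g a b, (1 : ℝ) := by simp
    _ = ∫ p in Ioc 0 1 ×ˢ Ioc a b, |(sectorMapDeriv f g p).det| • (1 : ℝ) :=
        integral_image_eq_integral_abs_det_fderiv_smul volume hmeas
          (fun p _ => (hasFDerivAt_sectorMap hf hg p).hasFDerivWithinAt) hinj _
    _ = ∫ p in Ioc 0 1 ×ˢ Ioc a b, 2 * p.1 * sectorDensity f g p.2 := by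
        refine setIntegral_congr_fun hmeas fun p hp => ?_
        have hnonneg : 0 ≤ 2 * p.1 * sectorDensity f g p.2 :=
          mul_nonneg (mul_nonneg zero_le_two hp.1.1.le) (hΔ p.2 hp.2)
        simp only [det_sectorMapDeriv, abs_neg, abs_of_nonneg hnonneg, smul_eq_mul, mul_one]
    _ = (∫ t in (0 : ℝ)..1, 2 * t) * ∫ ρ in a..b, sectorDensity f g ρ := by
        rw [Measure.volume_eq_prod, setIntegral_prod_mul (fun t : ℝ => 2 * t),
          intervalIntegral.integral_of_le zero_le_one, intervalIntegral.integral_of_le hab]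
    _ = ∫ ρ in a..b, sectorDensity f g ρ := by
        rw [intervalIntegral.integral_const_mul, integral_id]
        norm_num

lemma strictAntiOn_div_of_sectorDensity_pos (hf : Differentiable ℝ f) (hg : Differentiable ℝ g)
    (hfpos : ∀ ρ ∈ Ioo a b, 0 < f ρ) (hΔ : ∀ ρ ∈ Ioo a b, 0 < sectorDensity f g ρ) :
    StrictAntiOn (fun ρ => g ρ / f ρ) (Ioo a b) := by
  refine strictAntiOn_of_deriv_neg (convex_Ioo a b) ?_ fun ρ hρ => ?_
  · exact hg.continuous.continuousOn.div hf.continuous.continuousOn fun ρ hρ => (hfpos ρ hρ).ne'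
  rw [interior_Ioo] at hρ
  have hfρ := hfpos ρ hρ
  have hΔρ := hΔ ρ hρ
  rw [((hg ρ).hasDerivAt.fun_div (hf ρ).hasDerivAt hfρ.ne').deriv]
  refine div_neg_of_neg_of_pos ?_ (pow_pos hfρ 2)
  rw [sectorDensity] at hΔρ
  linarith

lemma injOn_sectorMap {I : Set ℝ} (hf : ∀ ρ ∈ I, f ρ ≠ 0)
    (hslope : InjOn (fun ρ => g ρ / f ρ) I) : InjOn (sectorMap f g) (Ioi 0 ×ˢ I) := by
  rintro ⟨t, ρ⟩ ⟨ht, hρ⟩ ⟨t', ρ'⟩ ⟨ht', hρ'⟩ h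
  obtain ⟨hfst, hsnd⟩ := Prod.mk.inj h
  obtain rfl : ρ = ρ' := hslope hρ hρ' <|
    calc g ρ / f ρ = (t * g ρ) / (t * f ρ) := (mul_div_mul_left _ _ ht.ne').symm
      _ = (t' * g ρ') / (t' * f ρ') := congrArg₂ _ hsnd hfst
      _ = g ρ' / f ρ' := mul_div_mul_left _ _ ht'.ne'
  exact Prod.ext (mul_right_cancel₀ (hf ρ hρ) hfst) rfl

lemma smul_sector {R : ℝ} (hR : 0 < R) (a b : ℝ) :
    R • sector f g a b = sectorMap f g '' (Ioc 0 R ×ˢ Ioc a b) := by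
  have hscale : R • Ioc (0 : ℝ) 1 = Ioc 0 R := by
    rw [LinearOrderedField.smul_Ioc hR, mul_zero, mul_one]
  ext x
  constructor
  · rintro ⟨_, ⟨⟨t, ρ⟩, ⟨ht, hρ⟩, rfl⟩, rfl⟩
    exact ⟨(R * t, ρ), ⟨hscale ▸ smul_mem_smul_set ht, hρ⟩, by simp [sectorMap, mul_assoc]⟩
  · rintro ⟨⟨t, ρ⟩, ⟨ht, hρ⟩, rfl⟩
    obtain ⟨u, hu, rfl⟩ := hscale ▸ ht
    exact ⟨_, ⟨(u, ρ), ⟨hu, hρ⟩, rfl⟩, by simp [sectorMap, mul_assoc]⟩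

lemma sectorMap_div_eq {x y ρ : ℝ} (hfρ : f ρ ≠ 0) (hxy : x * g ρ = y * f ρ) :
    sectorMap f g (x / f ρ, ρ) = (x, y) := by
  simp only [sectorMap, Prod.mk.injEq]
  exact ⟨div_mul_cancel₀ x hfρ, by rw [div_mul_eq_mul_div, hxy, mul_div_cancel_right₀ y hfρ]⟩

variable {s : ℝ}

lemma mem_smul_sector_iff (hfpos : ∀ ρ ∈ Ioo a b, 0 < f ρ)
    (hanti : StrictAntiOn (fun ρ => g ρ / f ρ) (Ioo a b)) (hs : s ∈ Ioo a b) {x y ρ R : ℝ}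
    (hR : 0 < R) (hx : 0 < x) (hρ : ρ ∈ Ioo a b) (hxy : x * g ρ = y * f ρ) :
    (x, y) ∈ R • sector f g a s ↔ x * g s / f s ≤ y ∧ x / f ρ ≤ R := by
  have hfρ := hfpos ρ hρ
  have hinj : InjOn (sectorMap f g) (Ioi 0 ×ˢ Ioo a b) :=
    injOn_sectorMap (fun ρ hρ => (hfpos ρ hρ).ne') hanti.injOn
  have hsub : Ioc 0 R ×ˢ Ioc a s ⊆ Ioi 0 ×ˢ Ioo a b :=
    prod_mono Ioc_subset_Ioi_self fun ρ hρ => ⟨hρ.1, hρ.2.trans_lt hs.2⟩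
  have hmem : (x / f ρ, ρ) ∈ Ioi 0 ×ˢ Ioo a b := ⟨div_pos hx hfρ, hρ⟩
  have hslope : ρ ≤ s ↔ x * g s / f s ≤ y := by
    have hy : x * (g ρ / f ρ) = y := by rw [← mul_div_assoc, hxy, mul_div_cancel_right₀ y hfρ.ne']
    rw [← hanti.le_iff_ge hs hρ, mul_div_assoc, ← hy, mul_le_mul_iff_right₀ hx]
  rw [← sectorMap_div_eq hfρ.ne' hxy, smul_sector hR, hinj.mem_image_iff hsub hmem, ← hslope]
  simp only [mem_prod, mem_Ioc, div_pos hx hfρ, hρ.1, true_and, and_comm]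

lemma exists_slope_eq_of_mem_smul_sector (hfpos : ∀ ρ ∈ Ioc a s, 0 < f ρ) {x y R : ℝ} (hR : 0 < R)
    (h : (x, y) ∈ R • sector f g a s) : 0 < x ∧ ∃ ρ ∈ Ioc a s, x * g ρ = y * f ρ := by
  rw [smul_sector hR] at h
  obtain ⟨⟨t, ρ⟩, ⟨ht, hρ⟩, h⟩ := h
  obtain ⟨rfl, rfl⟩ := Prod.mk.inj h
  exact ⟨mul_pos ht.1 (hfpos ρ hρ), ρ, hρ, by ring⟩

lemma gamma_le_set_eq_preimage_smul_sector (hfpos : ∀ ρ ∈ Ioo a b, 0 < f ρ)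
    (hanti : StrictAntiOn (fun ρ => g ρ / f ρ) (Ioo a b)) (hs : s ∈ Ioo a b)
    {rkm : ℤ → ℤ → ℝ}
    (hrkm : ∀ k m : ℤ, 1 ≤ k → (k : ℝ) * g s / f s ≤ m →
      rkm k m ∈ Ioo a b ∧ (k : ℝ) * g (rkm k m) = (m : ℝ) * f (rkm k m))
    {r : ℝ} (hr : 0 < r) :
    {p : ℤ × ℤ | 1 ≤ p.1 ∧ (p.1 : ℝ) * g s / f s ≤ (p.2 : ℝ) ∧
        2 * (p.1 : ℝ) / f (rkm p.1 p.2) ≤ r} =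
      Prod.map Int.cast Int.cast ⁻¹' ((r / 2) • sector f g a s) := by
  ext ⟨k, m⟩
  have hγ (x y : ℝ) : 2 * x / y ≤ r ↔ x / y ≤ r / 2 := by
    rw [mul_div_assoc, le_div_iff₀' two_pos]
  simp only [mem_ofPred_eq, mem_preimage, Prod.map_apply, hγ]
  constructor
  · rintro ⟨hk, hm⟩
    obtain ⟨hρ, hkm⟩ := hrkm k m hk hm.1
    exact (mem_smul_sector_iff hfpos hanti hs (half_pos hr) (Int.cast_pos.2 hk) hρ hkm).2 hm
  · intro h
    have hsub : ∀ ρ ∈ Ioc a s, ρ ∈ Ioo a b := fun ρ hρ => ⟨hρ.1, hρ.2.trans_lt hs.2⟩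
    obtain ⟨hk, σ, hσ, hσkm⟩ :=
      exists_slope_eq_of_mem_smul_sector (fun ρ hρ => hfpos ρ (hsub ρ hρ)) (half_pos hr) h
    have hk1 : 1 ≤ k := Int.cast_pos.1 hk
    have hm := ((mem_smul_sector_iff hfpos hanti hs (half_pos hr) hk (hsub σ hσ) hσkm).1 h).1
    obtain ⟨hρ, hkm⟩ := hrkm k m hk1 hm
    exact ⟨hk1, (mem_smul_sector_iff hfpos hanti hs (half_pos hr) hk hρ hkm).1 h⟩

end Sector

theorem lattice_count_gamma_le_r_half_plane_general {f g : ℝ → ℝ} {a b s : ℝ}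
    (hf : ContDiff ℝ 1 f) (hg : ContDiff ℝ 1 g)
    (hfpos : ∀ ρ ∈ Ioo a b, 0 < f ρ) (hΔ : ∀ ρ ∈ Ioo a b, 0 < sectorDensity f g ρ)
    (hs : s ∈ Ioo a b) {rkm : ℤ → ℤ → ℝ}
    (hrkm : ∀ k m : ℤ, 1 ≤ k → (k : ℝ) * g s / f s ≤ m →
      rkm k m ∈ Ioo a b ∧ (k : ℝ) * g (rkm k m) = (m : ℝ) * f (rkm k m)) :
    ∃ c : ℝ, 0 < c ∧ ∀ r : ℝ, c ≤ r →
      {p : ℤ × ℤ | 1 ≤ p.1 ∧ (p.1 : ℝ) * g s / f s ≤ (p.2 : ℝ) ∧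
          2 * (p.1 : ℝ) / f (rkm p.1 p.2) ≤ r}.Finite ∧
      |({p : ℤ × ℤ | 1 ≤ p.1 ∧ (p.1 : ℝ) * g s / f s ≤ (p.2 : ℝ) ∧
            2 * (p.1 : ℝ) / f (rkm p.1 p.2) ≤ r}.ncard : ℝ) -
          r ^ 2 / 4 * ∫ ρ in a..s, sectorDensity f g ρ| ≤ c * r := by
  have hfd := hf.differentiable one_ne_zero
  have hgd := hg.differentiable one_ne_zero
  have hsub : Ioc a s ⊆ Ioo a b := fun ρ hρ => ⟨hρ.1, hρ.2.trans_lt hs.2⟩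
  have hanti := strictAntiOn_div_of_sectorDensity_pos hfd hgd hfpos hΔ
  have hinj : InjOn (sectorMap f g) (Ioc 0 1 ×ˢ Ioc a s) :=
    (injOn_sectorMap (fun ρ hρ => (hfpos ρ hρ).ne') hanti.injOn).mono
      (prod_mono Ioc_subset_Ioi_self hsub)
  have hvol := volume_real_sector hfd hgd hs.1.le (fun ρ hρ => (hΔ ρ (hsub hρ)).le) hinj
  have hbdd := isBounded_sector hf.continuous hg.continuous a s
  obtain ⟨C, hC, hcount⟩ := exists_abs_ncard_preimage_smul_sub_le hbdd
    (hasTubeGrowth_one_frontier_sector hf hg hs.1.le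
      fun ρ hρ => (hΔ ρ (hsub (Ioo_subset_Ioc_self hρ))).ne')
  refine ⟨C + 2, by positivity, fun r hr => ?_⟩
  have hr0 : 0 < r := by linarith
  rw [gamma_le_set_eq_preimage_smul_sector hfpos hanti hs hrkm hr0]
  refine ⟨finite_preimage_prodMap_intCast (hbdd.smul₀ _), ?_⟩
  calc _ ≤ C * (r / 2) ^ 1 := by
        rw [← hvol, show r ^ 2 / 4 = (r / 2) ^ 2 by ring]
        exact hcount (r / 2) (by linarith)
    _ ≤ (C + 2) * r := by nlinarith

/-- Lattice point count underlying Lemma 5.2: the number of integer pairs `(k,m)` with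
`k ≥ 1`, `m ≥ k/V` and `γ_{k,m} ≤ r` equals `(r²/4)·∫₀¹ Δ` up to an error of order `r`. -/
theorem lattice_count_gamma_le_r_half_plane
    (ε : ℝ) (hε0 : 0 < ε) (hε1 : ε < 1 / 100)
    (f g : ℝ → ℝ) (hf : ContDiff ℝ (⊤ : ℕ∞) f) (hg : ContDiff ℝ (⊤ : ℕ∞) g)
    (hfg0 : ∀ ρ ∈ Set.Icc (0 : ℝ) (10 * ε), f ρ = ρ ^ 2 ∧ g ρ = 2 - ρ ^ 2)
    (hfg2 : ∀ ρ ∈ Set.Icc (2 - 10 * ε) (2 : ℝ), f ρ = (2 - ρ) ^ 2 ∧ g ρ = -2 + (2 - ρ) ^ 2)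
    (hfpos : ∀ ρ ∈ Set.Ioo (0 : ℝ) 2, 0 < f ρ)
    (hΔpos : ∀ ρ ∈ Set.Ioo (0 : ℝ) 2, 0 < (deriv f ρ * g ρ - f ρ * deriv g ρ) / 2)
    (V : ℝ) (hV : 1 < V)
    (hfgV : ∀ ρ ∈ Set.Icc (1 - 5 * ε) (1 : ℝ), f ρ = V ∧ g ρ = 2 - ρ)
    (rkm : ℤ → ℤ → ℝ)
    (hrkm : ∀ k m : ℤ, 1 ≤ k →
      rkm k m ∈ Set.Ioo (0 : ℝ) 2 ∧ (k : ℝ) * g (rkm k m) = (m : ℝ) * f (rkm k m)) :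
    ∃ c : ℝ, 0 < c ∧ ∀ r : ℝ, c ≤ r →
      {p : ℤ × ℤ | 1 ≤ p.1 ∧ (p.1 : ℝ) / V ≤ (p.2 : ℝ) ∧
          2 * (p.1 : ℝ) / f (rkm p.1 p.2) ≤ r}.Finite ∧
      |({p : ℤ × ℤ | 1 ≤ p.1 ∧ (p.1 : ℝ) / V ≤ (p.2 : ℝ) ∧
            2 * (p.1 : ℝ) / f (rkm p.1 p.2) ≤ r}.ncard : ℝ) -
          r ^ 2 / 4 * ∫ ρ in (0 : ℝ)..1, (deriv f ρ * g ρ - f ρ * deriv g ρ) / 2|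
        ≤ c * r := by
  have hfg1 := hfgV 1 ⟨by linarith, le_rfl⟩
  simpa [hfg1, sectorDensity, show (2 : ℝ) - 1 = 1 by norm_num] using
    lattice_count_gamma_le_r_half_plane_general (s := 1) (hf.of_le (mod_cast le_top))
      (hg.of_le (mod_cast le_top)) hfpos hΔpos (by norm_num) fun k m hk _ => hrkm k m hk
end

section
/- There exists a constant c > 0 with the following significance: for all integers k ≥ 1 and m with |m| ≤ (1/(32ε²) − 1)·k, one has ρ_{k,m} ∈ [8ε, 2 − 8ε], and moreover |k·g(ρ) − m·f(ρ)| ≥ k/c for every ρ ∈ [0,2] with |ρ − ρ_{k,m}| ≥ ε, while |k·g(ρ) − m·f(ρ)| ≥ (k/c)·|ρ − ρ_{k,m}| for every ρ ∈ [0,2] with |ρ − ρ_{k,m}| < ε. -/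
/-!
Put `σ = m / k`. Where `f ≠ 0`, a zero `r` of `g - σ f` is a point with `(g / f) r = σ`, and
`g ρ - σ f ρ = f ρ ((g / f) ρ - (g / f) r)`. The derivative of `g / f` is `-2Δ / f²`, which is
bounded away from zero on `[ε, 2 - ε]`, so the mean value theorem bounds `|g ρ - σ f ρ|` below by a
multiple of `|ρ - r|`, uniformly in `σ`. This degenerates at the ends, where `f` vanishes; but at
distance `t` from an end, `±(g - σ f) = 2 - (1 ± σ) t²`, which the bound on `σ` keeps positive for
`t < 8ε` and at least `1` for `t ≤ ε`.
-/

open Set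

section MeanValue

variable {s : Set ℝ}

lemma exists_pos_mul_abs_sub_le_abs_sub_of_hasDerivAt_ne_zero {q q' : ℝ → ℝ} (hs : IsCompact s)
    (hconn : s.OrdConnected) (hq : ∀ x ∈ s, HasDerivAt q (q' x) x) (hq' : ContinuousOn q' s)
    (hne : ∀ x ∈ s, q' x ≠ 0) :
    ∃ C > 0, ∀ x ∈ s, ∀ y ∈ s, C * |x - y| ≤ |q x - q y| := by
  obtain ⟨C, hC, hle⟩ := hs.exists_forall_le' hq'.abs fun x hx => abs_pos.2 (hne x hx)
  refine ⟨C, hC, fun x hx y hy => ?_⟩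
  wlog hxy : x < y generalizing x y
  · rcases (not_lt.1 hxy).eq_or_lt with rfl | hyx
    · simp
    · simpa only [abs_sub_comm] using this y hy x hx hyx
  have hsub : Icc x y ⊆ s := hconn.out hx hy
  obtain ⟨z, hz, hslope⟩ := exists_hasDerivAt_eq_slope q q' hxy
    (fun z hz => (hq z (hsub hz)).continuousAt.continuousWithinAt)
    (fun z hz => hq z (hsub (Ioo_subset_Icc_self hz)))
  calc C * |x - y| ≤ |q' z| * |y - x| := by
        rw [abs_sub_comm x y]
        gcongr
        exact hle z (hsub (Ioo_subset_Icc_self hz))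
    _ = |q x - q y| := by
        rw [← abs_mul, hslope, div_mul_cancel₀ _ (sub_pos.2 hxy).ne', abs_sub_comm]

lemma exists_pos_mul_abs_sub_le_abs_sub_mul_of_wronskian_ne_zero {f f' g g' : ℝ → ℝ}
    (hs : IsCompact s) (hconn : s.OrdConnected)
    (hf : ∀ x ∈ s, HasDerivAt f (f' x) x) (hf' : ContinuousOn f' s)
    (hg : ∀ x ∈ s, HasDerivAt g (g' x) x) (hg' : ContinuousOn g' s)
    (hfne : ∀ x ∈ s, f x ≠ 0) (hW : ∀ x ∈ s, f' x * g x - f x * g' x ≠ 0) :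
    ∃ C > 0, ∀ σ : ℝ, ∀ r ∈ s, g r = σ * f r →
      ∀ ρ ∈ s, C * |ρ - r| ≤ |g ρ - σ * f ρ| := by
  have hfc : ContinuousOn f s := HasDerivAt.continuousOn hf
  have hgc : ContinuousOn g s := HasDerivAt.continuousOn hg
  obtain ⟨a, ha, hquot⟩ := exists_pos_mul_abs_sub_le_abs_sub_of_hasDerivAt_ne_zero hs hconn
    (fun x hx => (hg x hx).fun_div (hf x hx) (hfne x hx))
    (((hg'.mul hfc).sub (hgc.mul hf')).div (hfc.pow 2) fun x hx => pow_ne_zero 2 (hfne x hx))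
    (fun x hx => div_ne_zero (fun h => hW x hx (by linarith)) (pow_ne_zero 2 (hfne x hx)))
  obtain ⟨b, hb, hfb⟩ := hs.exists_forall_le' hfc.abs fun x hx => abs_pos.2 (hfne x hx)
  refine ⟨b * a, mul_pos hb ha, fun σ r hr hzero ρ hρ => ?_⟩
  have hσ : g r / f r = σ := (div_eq_iff (hfne r hr)).2 hzero
  calc b * a * |ρ - r| = b * (a * |ρ - r|) := mul_assoc _ _ _
    _ ≤ |f ρ| * |g ρ / f ρ - g r / f r| := by
        gcongr
        exacts [hfb ρ hρ, hquot ρ hρ r hr]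
    _ = |g ρ - σ * f ρ| := by
        rw [← abs_mul, hσ, mul_sub, mul_div_cancel₀ _ (hfne ρ hρ), mul_comm σ]

end MeanValue

section Ends

variable {ε σ t : ℝ}

lemma two_sub_sq_div_le_two_sub_sq_sub_mul_sq (hσ : σ ≤ 1 / (32 * ε ^ 2) - 1) :
    2 - t ^ 2 / (32 * ε ^ 2) ≤ 2 - t ^ 2 - σ * t ^ 2 := by
  have hmul : (1 + σ) * t ^ 2 ≤ 1 / (32 * ε ^ 2) * t ^ 2 := by
    gcongr
    linarith
  rw [one_div_mul_eq_div] at hmul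
  linarith

lemma two_sub_sq_sub_mul_sq_pos (hσ : σ ≤ 1 / (32 * ε ^ 2) - 1) (ht0 : 0 ≤ t) (ht : t < 8 * ε) :
    0 < 2 - t ^ 2 - σ * t ^ 2 := by
  have hε : 0 < ε := by linarith
  have hlt : t ^ 2 / (32 * ε ^ 2) < 2 := by
    rw [div_lt_iff₀ (by positivity)]
    nlinarith
  linarith [two_sub_sq_div_le_two_sub_sq_sub_mul_sq (t := t) hσ]

lemma one_le_two_sub_sq_sub_mul_sq (hσ : σ ≤ 1 / (32 * ε ^ 2) - 1) (ht0 : 0 ≤ t) (ht : t ≤ ε) :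
    1 ≤ 2 - t ^ 2 - σ * t ^ 2 := by
  have hle : t ^ 2 / (32 * ε ^ 2) ≤ 1 := div_le_one_of_le₀ (by nlinarith) (by positivity)
  linarith [two_sub_sq_div_le_two_sub_sq_sub_mul_sq (t := t) hσ]

end Ends

section Profile

variable {ε σ r ρ : ℝ} {f g : ℝ → ℝ}

lemma mem_Icc_of_eq_mul_of_abs_le (hfg0 : ∀ ρ ∈ Ico 0 (8 * ε), f ρ = ρ ^ 2 ∧ g ρ = 2 - ρ ^ 2)
    (hfg2 : ∀ ρ ∈ Ioc (2 - 8 * ε) 2, f ρ = (2 - ρ) ^ 2 ∧ g ρ = -2 + (2 - ρ) ^ 2)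
    (hσ : |σ| ≤ 1 / (32 * ε ^ 2) - 1) (hr : r ∈ Icc 0 2) (hzero : g r = σ * f r) :
    r ∈ Icc (8 * ε) (2 - 8 * ε) := by
  constructor
  · by_contra! hlt
    obtain ⟨hfr, hgr⟩ := hfg0 r ⟨hr.1, hlt⟩
    rw [hfr, hgr] at hzero
    linarith [two_sub_sq_sub_mul_sq_pos (le_of_abs_le hσ) hr.1 hlt]
  · by_contra! hlt
    obtain ⟨hfr, hgr⟩ := hfg2 r ⟨hlt, hr.2⟩
    rw [hfr, hgr] at hzero
    linarith [two_sub_sq_sub_mul_sq_pos ((neg_le_abs σ).trans hσ) (sub_nonneg.2 hr.2)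
      (by linarith)]

lemma one_le_abs_sub_mul_of_notMem_Icc (hε : 0 < ε)
    (hfg0 : ∀ ρ ∈ Ico 0 (8 * ε), f ρ = ρ ^ 2 ∧ g ρ = 2 - ρ ^ 2)
    (hfg2 : ∀ ρ ∈ Ioc (2 - 8 * ε) 2, f ρ = (2 - ρ) ^ 2 ∧ g ρ = -2 + (2 - ρ) ^ 2)
    (hσ : |σ| ≤ 1 / (32 * ε ^ 2) - 1) (hρ : ρ ∈ Icc 0 2) (hend : ρ ∉ Icc ε (2 - ε)) :
    1 ≤ |g ρ - σ * f ρ| := by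
  rcases lt_or_ge ρ ε with hlt | hge
  · obtain ⟨hfρ, hgρ⟩ := hfg0 ρ ⟨hρ.1, by linarith⟩
    rw [hfρ, hgρ]
    exact (one_le_two_sub_sq_sub_mul_sq (le_of_abs_le hσ) hρ.1 hlt.le).trans (le_abs_self _)
  · have hlt : 2 - ε < ρ := not_le.1 fun hle => hend ⟨hge, hle⟩
    obtain ⟨hfρ, hgρ⟩ := hfg2 ρ ⟨by linarith, hρ.2⟩
    rw [hfρ, hgρ]
    refine le_trans ?_ (neg_le_abs _)
    linarith [one_le_two_sub_sq_sub_mul_sq ((neg_le_abs σ).trans hσ) (sub_nonneg.2 hρ.2)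
      (by linarith)]

lemma exists_pos_mul_abs_sub_le_abs_sub_mul (hε : 0 < ε)
    (hf : ContDiffOn ℝ 1 f (Ioo 0 2)) (hg : ContDiffOn ℝ 1 g (Ioo 0 2))
    (hfg0 : ∀ ρ ∈ Ico 0 (8 * ε), f ρ = ρ ^ 2 ∧ g ρ = 2 - ρ ^ 2)
    (hfg2 : ∀ ρ ∈ Ioc (2 - 8 * ε) 2, f ρ = (2 - ρ) ^ 2 ∧ g ρ = -2 + (2 - ρ) ^ 2)
    (hfne : ∀ ρ ∈ Ioo 0 2, f ρ ≠ 0)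
    (hW : ∀ ρ ∈ Ioo 0 2, deriv f ρ * g ρ - f ρ * deriv g ρ ≠ 0) :
    ∃ δ > 0, ∀ σ : ℝ, |σ| ≤ 1 / (32 * ε ^ 2) - 1 → ∀ r ∈ Icc 0 2, g r = σ * f r →
      ∀ ρ ∈ Icc 0 2, δ * |ρ - r| ≤ |g ρ - σ * f ρ| := by
  have hsub : Icc ε (2 - ε) ⊆ Ioo 0 2 := Icc_subset_Ioo hε (by linarith)
  have hasDerivAt {h : ℝ → ℝ} (hh : ContDiffOn ℝ 1 h (Ioo 0 2)) (x) (hx : x ∈ Icc ε (2 - ε)) :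
      HasDerivAt h (deriv h x) x :=
    (hh.differentiableOn_one.differentiableAt (isOpen_Ioo.mem_nhds (hsub hx))).hasDerivAt
  have continuousOn_deriv {h : ℝ → ℝ} (hh : ContDiffOn ℝ 1 h (Ioo 0 2)) :
      ContinuousOn (deriv h) (Icc ε (2 - ε)) :=
    (hh.continuousOn_deriv_of_isOpen isOpen_Ioo le_rfl).mono hsub
  obtain ⟨C, hC, hmid⟩ := exists_pos_mul_abs_sub_le_abs_sub_mul_of_wronskian_ne_zero
    isCompact_Icc ordConnected_Icc (hasDerivAt hf) (continuousOn_deriv hf) (hasDerivAt hg)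
    (continuousOn_deriv hg) (fun x hx => hfne x (hsub hx)) (fun x hx => hW x (hsub hx))
  refine ⟨min C (1 / 2), by positivity, fun σ hσ r hr hzero ρ hρ => ?_⟩
  by_cases hρmid : ρ ∈ Icc ε (2 - ε)
  · have hrmid : r ∈ Icc ε (2 - ε) :=
      Icc_subset_Icc (by linarith) (by linarith)
        (mem_Icc_of_eq_mul_of_abs_le hfg0 hfg2 hσ hr hzero)
    calc min C (1 / 2) * |ρ - r| ≤ C * |ρ - r| := by gcongr; exact min_le_left _ _
      _ ≤ |g ρ - σ * f ρ| := hmid σ r hrmid hzero ρ hρmid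
  · have hdist : |ρ - r| ≤ 2 := by simpa using abs_sub_le_of_le_of_le hρ.1 hρ.2 hr.1 hr.2
    calc min C (1 / 2) * |ρ - r| ≤ 1 / 2 * 2 := by gcongr; exact min_le_right _ _
      _ = 1 := by norm_num
      _ ≤ |g ρ - σ * f ρ| := one_le_abs_sub_mul_of_notMem_Icc hε hfg0 hfg2 hσ hρ hρmid

theorem kg_sub_mf_lower_bound_general (hε : 0 < ε)
    (hf : ContDiffOn ℝ 1 f (Ioo 0 2)) (hg : ContDiffOn ℝ 1 g (Ioo 0 2))
    (hfg0 : ∀ ρ ∈ Ico 0 (8 * ε), f ρ = ρ ^ 2 ∧ g ρ = 2 - ρ ^ 2)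
    (hfg2 : ∀ ρ ∈ Ioc (2 - 8 * ε) 2, f ρ = (2 - ρ) ^ 2 ∧ g ρ = -2 + (2 - ρ) ^ 2)
    (hfne : ∀ ρ ∈ Ioo 0 2, f ρ ≠ 0)
    (hW : ∀ ρ ∈ Ioo 0 2, deriv f ρ * g ρ - f ρ * deriv g ρ ≠ 0) :
    ∃ c > 0, ∀ k m r : ℝ, 0 < k → |m| ≤ (1 / (32 * ε ^ 2) - 1) * k →
      r ∈ Icc 0 2 → k * g r = m * f r →
      r ∈ Icc (8 * ε) (2 - 8 * ε) ∧
      (∀ ρ ∈ Icc 0 2, ε ≤ |ρ - r| → k / c ≤ |k * g ρ - m * f ρ|) ∧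
      ∀ ρ ∈ Icc 0 2, k / c * |ρ - r| ≤ |k * g ρ - m * f ρ| := by
  obtain ⟨δ, hδ, hlin⟩ := exists_pos_mul_abs_sub_le_abs_sub_mul hε hf hg hfg0 hfg2 hfne hW
  refine ⟨(δ * min ε 1)⁻¹, by positivity, fun k m r hk hm hr hkm => ?_⟩
  obtain ⟨σ, rfl⟩ : ∃ σ, m = k * σ := ⟨m / k, (mul_div_cancel₀ m hk.ne').symm⟩
  have hσ : |σ| ≤ 1 / (32 * ε ^ 2) - 1 := by
    rw [abs_mul, abs_of_pos hk, mul_comm] at hm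
    exact le_of_mul_le_mul_right hm hk
  have hzero : g r = σ * f r := mul_left_cancel₀ hk.ne' (by rw [hkm, mul_assoc])
  have hscale (ρ : ℝ) : |k * g ρ - k * (σ * f ρ)| = k * |g ρ - σ * f ρ| := by
    rw [← mul_sub, abs_mul, abs_of_pos hk]
  simp only [hscale, div_inv_eq_mul, mul_assoc k, mul_le_mul_iff_right₀ hk]
  refine ⟨mem_Icc_of_eq_mul_of_abs_le hfg0 hfg2 hσ hr hzero, fun ρ hρ hfar => ?_,
    fun ρ hρ => ?_⟩
  · calc δ * min ε 1 ≤ δ * |ρ - r| := by gcongr; exact (min_le_left _ _).trans hfar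
      _ ≤ |g ρ - σ * f ρ| := hlin σ hσ r hr hzero ρ hρ
  · calc δ * min ε 1 * |ρ - r| ≤ δ * |ρ - r| := by
          gcongr
          exact mul_le_of_le_one_right hδ.le (min_le_right _ _)
      _ ≤ |g ρ - σ * f ρ| := hlin σ hσ r hr hzero ρ hρ

end Profile

/-- Estimate (5.12) in the paper: for `|m| ≤ (1/(32ε²) − 1)k`, the point `ρ_{k,m}` lies in
`[8ε, 2−8ε]` and `|k g − m f|` is bounded below linearly in `k`, respectively in
`k·|ρ − ρ_{k,m}|` near `ρ_{k,m}`. -/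
theorem kg_sub_mf_lower_bound
    (ε : ℝ) (hε0 : 0 < ε) (hε1 : ε < 1 / 100)
    (f g : ℝ → ℝ) (hf : ContDiff ℝ (⊤ : ℕ∞) f) (hg : ContDiff ℝ (⊤ : ℕ∞) g)
    (hfg0 : ∀ ρ ∈ Set.Icc (0 : ℝ) (10 * ε), f ρ = ρ ^ 2 ∧ g ρ = 2 - ρ ^ 2)
    (hfg2 : ∀ ρ ∈ Set.Icc (2 - 10 * ε) (2 : ℝ), f ρ = (2 - ρ) ^ 2 ∧ g ρ = -2 + (2 - ρ) ^ 2)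
    (hfpos : ∀ ρ ∈ Set.Ioo (0 : ℝ) 2, 0 < f ρ)
    (hΔpos : ∀ ρ ∈ Set.Ioo (0 : ℝ) 2, 0 < (deriv f ρ * g ρ - f ρ * deriv g ρ) / 2)
    (rkm : ℤ → ℤ → ℝ)
    (hrkm : ∀ k m : ℤ, 1 ≤ k →
      rkm k m ∈ Set.Ioo (0 : ℝ) 2 ∧ (k : ℝ) * g (rkm k m) = (m : ℝ) * f (rkm k m)) :
    ∃ c : ℝ, 0 < c ∧ ∀ k m : ℤ, 1 ≤ k → |(m : ℝ)| ≤ (1 / (32 * ε ^ 2) - 1) * (k : ℝ) →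
      rkm k m ∈ Set.Icc (8 * ε) (2 - 8 * ε) ∧
      (∀ ρ ∈ Set.Icc (0 : ℝ) 2, ε ≤ |ρ - rkm k m| →
        (k : ℝ) / c ≤ |(k : ℝ) * g ρ - (m : ℝ) * f ρ|) ∧
      (∀ ρ ∈ Set.Icc (0 : ℝ) 2, |ρ - rkm k m| < ε →
        (k : ℝ) / c * |ρ - rkm k m| ≤ |(k : ℝ) * g ρ - (m : ℝ) * f ρ|) := by
  obtain ⟨c, hc, hbound⟩ := kg_sub_mf_lower_bound_general hε0
    (hf.of_le (mod_cast le_top)).contDiffOn (hg.of_le (mod_cast le_top)).contDiffOn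
    (fun ρ hρ => hfg0 ρ ⟨hρ.1, by linarith [hρ.2]⟩)
    (fun ρ hρ => hfg2 ρ ⟨by linarith [hρ.1], hρ.2⟩)
    (fun ρ hρ => (hfpos ρ hρ).ne')
    (fun ρ hρ => ((div_pos_iff_of_pos_right two_pos).1 (hΔpos ρ hρ)).ne')
  refine ⟨c, hc, fun k m hk hm => ?_⟩
  obtain ⟨hmem, hfar, hlin⟩ := hbound k m (rkm k m) (by exact_mod_cast hk) hm
    (Ioo_subset_Icc_self (hrkm k m hk).1) (hrkm k m hk).2
  exact ⟨hmem, hfar, fun ρ hρ _ => hlin ρ hρ⟩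
end

section
/- Fix a constant ε ∈ (0, 1/100). There exists a constant c > 2 such that for every real number γ > 0 and every real number t ≥ 9ε, one has (1/Γ(32ε²γ + 1)) · (γ/2)^{32ε²γ + 1} · t^{64ε²γ} · exp(−(1/2 − 1/c)·γt²) ≤ c. -/
/-!
Put `α = 32ε²`, `τ = 9ε`, `a = αγ` and `x = γt²/2`. The prefactor equals
`(γ/2) · xᵃe⁻ˣ / Γ(a+1) · e^{2x/c}`. Since `Γ(a+1) ≥ aᵃe⁻ᵃ`, the middle quotient is at most
`(x/a)ᵃ e^{a-x} = e^{-x h(a/x)}`, where `h(u) = u log u + 1 - u` is Mathlib's `klFun`. The condition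
`t ≥ τ` keeps `a/x` below `ρ = 2α/τ² < 1`, where `h` is at least `δ = h(ρ) > 0`. Taking `c ≥ 4/δ`
spends only half of the decay `e^{-δx}` on `e^{2x/c}`, and the other half absorbs the factor `γ/2`,
because `x` is at least a constant multiple of `γ`.
-/

section

open Real Set MeasureTheory InformationTheory

-- On `(a, ∞)` the Gamma integrand `e⁻ʸ yᵃ` dominates `aᵃ e⁻ʸ`.
lemma rpow_self_mul_exp_neg_le_Gamma_add_one {a : ℝ} (ha : 0 ≤ a) :
    a ^ a * exp (-a) ≤ Gamma (a + 1) := by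
  have integrable : IntegrableOn (fun y ↦ exp (-y) * y ^ a) (Ioi 0) := by
    simpa only [add_sub_cancel_right] using GammaIntegral_convergent (s := a + 1) (by linarith)
  have Ioi_subset : Ioi a ⊆ Ioi 0 := Ioi_subset_Ioi ha
  calc a ^ a * exp (-a)
      = ∫ y in Ioi a, a ^ a * exp (-y) := by rw [integral_const_mul, integral_exp_neg_Ioi]
    _ ≤ ∫ y in Ioi a, exp (-y) * y ^ a := by
        refine setIntegral_mono_on ((integrableOn_exp_neg_Ioi a).const_mul _)
          (integrable.mono_set Ioi_subset) measurableSet_Ioi fun y hy ↦ ?_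
        rw [mul_comm]
        gcongr
        exact (mem_Ioi.mp hy).le
    _ ≤ ∫ y in Ioi 0, exp (-y) * y ^ a := by
        refine setIntegral_mono_set integrable ?_ Ioi_subset.eventuallyLE
        filter_upwards [ae_restrict_mem measurableSet_Ioi] with y hy
        exact mul_nonneg (exp_pos _).le (rpow_nonneg (mem_Ioi.mp hy).le a)
    _ = Gamma (a + 1) := by rw [Gamma_eq_integral (by linarith), add_sub_cancel_right]

lemma antitoneOn_klFun_Icc : AntitoneOn klFun (Icc 0 1) := by
  refine antitoneOn_of_deriv_nonpos (convex_Icc 0 1) continuous_klFun.continuousOn ?_ ?_ <;>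
    rw [interior_Icc] <;> intro u hu
  · exact (hasDerivAt_klFun hu.1.ne').differentiableAt.differentiableWithinAt
  · rw [deriv_klFun]
    exact log_nonpos hu.1.le hu.2.le

lemma klFun_pos_of_ne_one {u : ℝ} (hu : 0 ≤ u) (hu_ne : u ≠ 1) : 0 < klFun u :=
  (klFun_nonneg hu).lt_of_ne' fun h ↦ hu_ne ((klFun_eq_zero_iff hu).mp h)

lemma rpow_mul_exp_neg_eq_klFun {a x : ℝ} (ha : 0 ≤ a) (hx : 0 < x) :
    x ^ a * exp (-x) = a ^ a * exp (-a) * exp (-(klFun (a / x) * x)) := by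
  rcases ha.eq_or_lt with rfl | ha_pos
  · simp [klFun_apply]
  · rw [rpow_def_of_pos hx, rpow_def_of_pos ha_pos, ← exp_add, ← exp_add, ← exp_add, klFun_apply,
      log_div ha_pos.ne' hx.ne']
    congr 1
    field_simp
    ring

lemma rpow_mul_exp_neg_le_Gamma_mul_exp_klFun {a x ρ : ℝ} (ha : 0 ≤ a) (hx : 0 < x) (hρ : ρ ≤ 1)
    (hax : a ≤ ρ * x) :
    x ^ a * exp (-x) ≤ Gamma (a + 1) * exp (-(klFun ρ * x)) := by
  have ratio_nonneg : 0 ≤ a / x := by positivity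
  have ratio_le : a / x ≤ ρ := (div_le_iff₀ hx).mpr hax
  have klFun_le : klFun ρ ≤ klFun (a / x) :=
    antitoneOn_klFun_Icc ⟨ratio_nonneg, ratio_le.trans hρ⟩ ⟨ratio_nonneg.trans ratio_le, hρ⟩
      ratio_le
  rw [rpow_mul_exp_neg_eq_klFun ha hx]
  gcongr
  exact rpow_self_mul_exp_neg_le_Gamma_add_one ha

lemma mul_exp_neg_mul_le_inv {k : ℝ} (hk : 0 < k) (y : ℝ) : y * exp (-(k * y)) ≤ k⁻¹ := by
  have mul_exp_neg_le_one : k * y * exp (-(k * y)) ≤ 1 :=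
    (mul_exp_neg_le_exp_neg_one _).trans (exp_le_one_iff.mpr (by norm_num))
  rwa [← one_div, le_div_iff₀' hk, ← mul_assoc]

lemma rpow_add_one_mul_rpow_two_mul {b t : ℝ} (hb : 0 < b) (ht : 0 ≤ t) (a : ℝ) :
    b ^ (a + 1) * t ^ (2 * a) = b * (b * t ^ 2) ^ a := by
  rw [rpow_add_one hb.ne', rpow_mul ht, rpow_two, mul_rpow hb.le (sq_nonneg t)]
  ring

lemma gamma_prefactor_le_mul_exp_klFun {α τ γ t c : ℝ} (hα : 0 ≤ α) (hτ : 0 < τ)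
    (hατ : 2 * α ≤ τ ^ 2) (hγ : 0 < γ) (ht : τ ≤ t) :
    1 / Gamma (α * γ + 1) * (γ / 2) ^ (α * γ + 1) * t ^ (2 * α * γ) *
        exp (-(1 / 2 - 1 / c) * γ * t ^ 2)
      ≤ γ / 2 * exp (-((klFun (2 * α / τ ^ 2) - 2 / c) * (γ / 2 * t ^ 2))) := by
  have ht_pos : 0 < t := hτ.trans_le ht
  set a := α * γ with ha
  set x := γ / 2 * t ^ 2 with hx
  set δ := klFun (2 * α / τ ^ 2)
  have hΓ : 0 < Gamma (a + 1) := Gamma_pos_of_pos (by positivity)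
  have a_le : a ≤ 2 * α / τ ^ 2 * x := by
    calc a = 2 * α / τ ^ 2 * (γ / 2 * τ ^ 2) := by rw [ha]; field_simp
      _ ≤ 2 * α / τ ^ 2 * x := by rw [hx]; gcongr
  have gamma_bound : x ^ a * exp (-x) ≤ Gamma (a + 1) * exp (-(δ * x)) :=
    rpow_mul_exp_neg_le_Gamma_mul_exp_klFun (by positivity) (by positivity)
      (div_le_one_of_le₀ hατ (by positivity)) a_le
  have exp_split : exp (-(1 / 2 - 1 / c) * γ * t ^ 2) = exp (-x) * exp (2 / c * x) := by
    rw [← exp_add, hx]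
    ring_nf
  calc 1 / Gamma (a + 1) * (γ / 2) ^ (a + 1) * t ^ (2 * α * γ) *
        exp (-(1 / 2 - 1 / c) * γ * t ^ 2)
      = γ / 2 * (x ^ a * exp (-x) / Gamma (a + 1)) * exp (2 / c * x) := by
        rw [exp_split, mul_assoc 2 α γ, mul_assoc (1 / _),
          rpow_add_one_mul_rpow_two_mul (half_pos hγ) ht_pos.le]
        ring
    _ ≤ γ / 2 * exp (-(δ * x)) * exp (2 / c * x) := by
        gcongr
        exact (div_le_iff₀' hΓ).mpr gamma_bound
    _ = γ / 2 * exp (-((δ - 2 / c) * x)) := by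
        rw [mul_assoc, ← exp_add]
        ring_nf

theorem gamma_function_prefactor_uniform_bound_general {α τ : ℝ} (hα : 0 ≤ α) (hτ : 0 < τ)
    (hατ : 2 * α < τ ^ 2) :
    ∃ c : ℝ, 2 < c ∧ ∀ γ t : ℝ, 0 < γ → τ ≤ t →
      1 / Gamma (α * γ + 1) * (γ / 2) ^ (α * γ + 1) * t ^ (2 * α * γ) *
          exp (-(1 / 2 - 1 / c) * γ * t ^ 2)
        ≤ c := by
  set δ := klFun (2 * α / τ ^ 2)
  have hδ : 0 < δ :=
    klFun_pos_of_ne_one (by positivity) ((div_lt_one (by positivity)).mpr hατ).ne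
  set c := 2 + 4 / δ + 2 / (δ * τ ^ 2)
  have four_div_δ_le : 4 / δ ≤ c := by linarith [show 0 < 2 / (δ * τ ^ 2) by positivity]
  have half_decay_remains : δ / 2 ≤ δ - 2 / c := by
    have two_div_c_le : 2 / c ≤ δ / 2 := calc
      2 / c ≤ 2 / (4 / δ) := by gcongr
      _ = δ / 2 := by field_simp; norm_num
    linarith
  refine ⟨c, by linarith [show 0 < 4 / δ + 2 / (δ * τ ^ 2) by positivity], fun γ t hγ ht ↦ ?_⟩
  calc 1 / Gamma (α * γ + 1) * (γ / 2) ^ (α * γ + 1) * t ^ (2 * α * γ) *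
        exp (-(1 / 2 - 1 / c) * γ * t ^ 2)
      ≤ γ / 2 * exp (-((δ - 2 / c) * (γ / 2 * t ^ 2))) :=
        gamma_prefactor_le_mul_exp_klFun hα hτ hατ.le hγ ht
    _ ≤ γ / 2 * exp (-(δ / 2 * (γ / 2 * t ^ 2))) := by gcongr
    _ ≤ γ / 2 * exp (-(δ / 2 * (γ / 2 * τ ^ 2))) := by gcongr
    _ = γ / 2 * exp (-(δ * τ ^ 2 / 2 * (γ / 2))) := by ring_nf
    _ ≤ (δ * τ ^ 2 / 2)⁻¹ := mul_exp_neg_mul_le_inv (by positivity) _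
    _ = 2 / (δ * τ ^ 2) := inv_div _ _
    _ ≤ c := by linarith [show 0 < 4 / δ by positivity]

end

/-- The Stirling-type uniform bound in the proof of Lemma 5.11: the prefactor
`Γ(32ε²γ+1)⁻¹ (γ/2)^{32ε²γ+1} t^{64ε²γ} e^{-(1/2-1/c)γt²}` is uniformly bounded
for all `γ > 0` and `t ≥ 9ε`. -/
theorem gamma_function_prefactor_uniform_bound (ε : ℝ) (hε0 : 0 < ε) (hε1 : ε < 1 / 100) :
    ∃ c : ℝ, 2 < c ∧ ∀ γ t : ℝ, 0 < γ → 9 * ε ≤ t →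
      (1 / Real.Gamma (32 * ε ^ 2 * γ + 1)) * (γ / 2) ^ (32 * ε ^ 2 * γ + 1) *
          t ^ (64 * ε ^ 2 * γ) * Real.exp (-(1 / 2 - 1 / c) * γ * t ^ 2)
        ≤ c := by
  have two_mul_α : 2 * (32 * ε ^ 2) = 64 * ε ^ 2 := by ring
  exact two_mul_α ▸ gamma_function_prefactor_uniform_bound_general (α := 32 * ε ^ 2) (τ := 9 * ε)
    (by positivity) (by positivity) (by nlinarith [pow_pos hε0 2])
end
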